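/- arXiv:2001.09274 — 2 statements merged into one kernel-verified Lean document; each statement's English description precedes it below -/
import Mathlib

section
/- Let λ_1, …, λ_n and α_1, …, α_n be real numbers and let M be a positive integer. Assume that for all integers u_1, …, u_n with |u_j| ≤ M for every j, the equality u_1λ_1 + ⋯ + u_nλ_n = 0 implies that u_1α_1 + ⋯ + u_nα_n is an integer. Assume moreover that the set {|u_1λ_1 + ⋯ + u_nλ_n| : u_j ∈ ℤ, |u_j| ≤ M, u_1λ_1 + ⋯ + u_nλ_n ≠ 0} is nonempty, and let Λ be its minimum. Then for all positive real numbers δ_1, …, δ_n and all reals T_1 < T_2, writing Δ = δ_1 + ⋯ + δ_n, one has inf_{t ∈ [T_1, T_2]} ∑_{j=1}^n δ_j ‖λ_j t − α_j‖² ≤ (Δ/4)·sin²(π/(2(M+1))) + Δ·M^n/(4π(T_2 − T_1)Λ). -/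
open Filter Real Set

/-- Distance from a real number to the nearest integer. -/
noncomputable def distNearestInt (x : ℝ) : ℝ := |x - round x|

/-!
Put `θ = π / (M + 1)`, `e(x) = exp(2πix)` and `K(x) = |∑_{k < M} sin((k + 1)θ) e(kx)|²`. The
coefficients `sin(kθ)` form the positive eigenvector, for the eigenvalue `2 cos θ`, of the path
with `M` vertices; hence both `K` and `(cos 2πx - cos θ) K(x)` are trigonometric polynomials of
degree at most `M` with nonnegative coefficients, and the second one has constant coefficient
`0`.

Expand a product over `j` of such polynomials, evaluated at `λ_j t - α_j`, and integrate over
`[T₁, T₂]`. Resonant terms contribute at least `0` because their phase is an integer, and each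
other term loses at most `1 / (πΛ)`, so the integral is at least `T₂ - T₁` times the product of
the constant coefficients minus `1 / (πΛ)` times the product of the values at `0`.

Let `R = M ^ n / (π (T₂ - T₁) Λ)`. If `2R ≥ 1 + cos θ`, the asserted bound is at least `Δ / 4`,
which is trivial. Otherwise take `(cos 2πx - cos θ + 2R) K(x)` in one coordinate and `K` in the
others: in the mean against `∏ K(λ_j t - α_j)`, every `cos 2π(λ_j t - α_j)` exceeds
`cos θ - 2R`. The theorem follows since `‖x‖² ≤ (1 - cos 2πx) / 8`.
-/

open scoped FourierTransform

section DistNearestInt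

lemma cos_two_pi_mul_distNearestInt (x : ℝ) :
    cos (2 * π * distNearestInt x) = cos (2 * π * x) := by
  have h : 2 * π * distNearestInt x = |2 * π * (x - round x)| := by
    rw [distNearestInt, abs_mul, abs_of_pos two_pi_pos]
  rw [h, cos_abs, mul_sub, mul_comm _ (round x : ℝ), cos_sub_int_mul_two_pi]

lemma sq_distNearestInt_le (x : ℝ) :
    distNearestInt x ^ 2 ≤ (1 - cos (2 * π * x)) / 8 := by
  have hr_nonneg : 0 ≤ distNearestInt x := abs_nonneg _
  have hr_le : distNearestInt x ≤ 1 / 2 := abs_sub_round x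
  have jordan : 2 * distNearestInt x ≤ sin (π * distNearestInt x) :=
    calc 2 * distNearestInt x = 2 / π * (π * distNearestInt x) := by field_simp
      _ ≤ sin (π * distNearestInt x) :=
        mul_le_sin (by positivity) (by nlinarith [pi_pos])
  rw [← cos_two_pi_mul_distNearestInt, mul_assoc, cos_two_mul, cos_sq']
  nlinarith

end DistNearestInt

section NonnegTrigPoly

/-- `IsNonnegTrigPoly M c₀ f` says that `f` is a real-valued trigonometric polynomial of period `1`
and degree at most `M`, with nonnegative Fourier coefficients, and that its constant coefficient
is `c₀`. -/
def IsNonnegTrigPoly (M : ℕ) (c₀ : ℝ) (f : ℝ → ℝ) : Prop :=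
  ∃ c : ℤ → ℝ, (∀ k, 0 ≤ c k) ∧ c 0 = c₀ ∧
    ∀ x, (f x : ℂ) = ∑ k ∈ Finset.Icc (-M : ℤ) M, (c k : ℂ) * 𝐞 (k * x)

namespace IsNonnegTrigPoly

variable {M : ℕ} {c₀ d₀ : ℝ} {f g : ℝ → ℝ}

lemma of_sum {κ : Type*} {s : Finset κ} {w : κ → ℝ} {φ : κ → ℤ}
    (hw : ∀ p ∈ s, 0 ≤ w p) (hφ : ∀ p ∈ s, |φ p| ≤ M)
    (hf : ∀ x, (f x : ℂ) = ∑ p ∈ s, (w p : ℂ) * 𝐞 (φ p * x)) :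
    IsNonnegTrigPoly M (∑ p ∈ s with φ p = 0, w p) f := by
  refine ⟨fun k ↦ ∑ p ∈ s with φ p = k, w p,
    fun k ↦ Finset.sum_nonneg fun p hp ↦ hw p (Finset.mem_filter.mp hp).1, rfl, fun x ↦ ?_⟩
  have hmaps : ∀ p ∈ s, φ p ∈ Finset.Icc (-M : ℤ) M :=
    fun p hp ↦ Finset.mem_Icc.mpr (abs_le.mp (hφ p hp))
  rw [hf, ← Finset.sum_fiberwise_of_maps_to hmaps]
  refine Finset.sum_congr rfl fun k _ ↦ ?_
  rw [Complex.ofReal_sum, Finset.sum_mul]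
  refine Finset.sum_congr rfl fun p hp ↦ ?_
  rw [(Finset.mem_filter.mp hp).2]

lemma add (hf : IsNonnegTrigPoly M c₀ f) (hg : IsNonnegTrigPoly M d₀ g) :
    IsNonnegTrigPoly M (c₀ + d₀) (fun x ↦ f x + g x) := by
  obtain ⟨c, hc, rfl, hfc⟩ := hf
  obtain ⟨d, hd, rfl, hgd⟩ := hg
  refine ⟨fun k ↦ c k + d k, fun k ↦ add_nonneg (hc k) (hd k), rfl, fun x ↦ ?_⟩
  simp only [Complex.ofReal_add, hfc, hgd, add_mul, Finset.sum_add_distrib]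

lemma const_mul {r : ℝ} (hr : 0 ≤ r) (hf : IsNonnegTrigPoly M c₀ f) :
    IsNonnegTrigPoly M (r * c₀) (fun x ↦ r * f x) := by
  obtain ⟨c, hc, rfl, hfc⟩ := hf
  refine ⟨fun k ↦ r * c k, fun k ↦ mul_nonneg hr (hc k), rfl, fun x ↦ ?_⟩
  simp only [Complex.ofReal_mul, hfc, Finset.mul_sum, mul_assoc]

lemma sub_sub_const_mul {r c : ℝ} (hr : 0 ≤ r) (hg : IsNonnegTrigPoly M d₀ g)
    (hfg : IsNonnegTrigPoly M c₀ (fun x ↦ (f x - c) * g x)) :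
    IsNonnegTrigPoly M (c₀ + r * d₀) (fun x ↦ (f x - (c - r)) * g x) := by
  convert hfg.add (hg.const_mul hr) using 2 with x
  ring

lemma apply_zero_nonneg (hf : IsNonnegTrigPoly M c₀ f) : 0 ≤ f 0 := by
  obtain ⟨c, hc, -, hfc⟩ := hf
  have h : f 0 = ∑ k ∈ Finset.Icc (-M : ℤ) M, c k := by
    have := hfc 0
    simp only [mul_zero, AddChar.map_zero_eq_one, Circle.coe_one, mul_one] at this
    exact_mod_cast this
  exact h ▸ Finset.sum_nonneg fun k _ ↦ hc k

lemma continuous (hf : IsNonnegTrigPoly M c₀ f) : Continuous f := by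
  obtain ⟨c, -, -, hfc⟩ := hf
  refine Complex.isometry_ofReal.isEmbedding.continuous_iff.mpr ?_
  have : Complex.ofReal ∘ f = fun x ↦ ∑ k ∈ Finset.Icc (-M : ℤ) M, (c k : ℂ) * 𝐞 (k * x) :=
    funext hfc
  rw [this]
  have := continuous_fourierChar
  fun_prop

end IsNonnegTrigPoly

end NonnegTrigPoly

section ExpSum

/-- The exponential sum `a 0 + a 1 e(x) + ⋯ + a (N - 1) e((N - 1) x)`, where `e(x) = exp(2πix)`. -/
noncomputable def expSum (N : ℕ) (a : ℕ → ℝ) (x : ℝ) : ℂ :=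
  ∑ k ∈ Finset.range N, (a k : ℂ) * 𝐞 (k * x)

lemma conj_expSum (N : ℕ) (a : ℕ → ℝ) (x : ℝ) :
    starRingEnd ℂ (expSum N a x) = ∑ k ∈ Finset.range N, (a k : ℂ) * 𝐞 (-(k * x)) := by
  simp only [expSum, map_sum, map_mul, Complex.conj_ofReal, AddChar.map_neg_eq_inv,
    Circle.coe_inv_eq_conj]

lemma normSq_expSum_zero_le (N : ℕ) (a : ℕ → ℝ) :
    Complex.normSq (expSum N a 0) ≤ N * ∑ k ∈ Finset.range N, a k ^ 2 := by
  have h : expSum N a 0 = ((∑ k ∈ Finset.range N, a k : ℝ) : ℂ) := by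
    simp [expSum]
  rw [h, Complex.normSq_ofReal, ← sq]
  simpa using sq_sum_le_card_mul_sum_sq (s := Finset.range N) (f := a)

lemma isNonnegTrigPoly_normSq_expSum {N : ℕ} {a : ℕ → ℝ} (ha : ∀ k < N, 0 ≤ a k) :
    IsNonnegTrigPoly N (∑ k ∈ Finset.range N, a k ^ 2)
      (fun x ↦ Complex.normSq (expSum N a x)) := by
  have hdiag : ∑ p ∈ Finset.range N ×ˢ Finset.range N with (p.1 - p.2 : ℤ) = 0, a p.1 * a p.2 =
      ∑ k ∈ Finset.range N, a k ^ 2 := by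
    simp only [sub_eq_zero, Nat.cast_inj, ← Finset.diag_eq_filter, Finset.sum_diag, sq]
  rw [← hdiag]
  refine .of_sum (fun p hp ↦ ?_) (fun p hp ↦ ?_) fun x ↦ ?_
  · rw [Finset.mem_product, Finset.mem_range, Finset.mem_range] at hp
    exact mul_nonneg (ha _ hp.1) (ha _ hp.2)
  · rw [Finset.mem_product, Finset.mem_range, Finset.mem_range] at hp
    rw [abs_le]
    lia
  · rw [← Complex.mul_conj, conj_expSum, expSum, Finset.sum_mul_sum, ← Finset.sum_product']
    refine Finset.sum_congr rfl fun p _ ↦ ?_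
    rw [mul_mul_mul_comm, ← Circle.coe_mul, ← AddChar.map_add_eq_mul, ← sub_eq_add_neg, ← sub_mul]
    push_cast
    rfl

end ExpSum

section PathEigenvector

variable {s : ℕ → ℝ} {c : ℝ}

lemma path_recurrence_telescope (hs₀ : s 0 = 0) (hs : ∀ k, s (k + 2) + s k = 2 * c * s (k + 1))
    {z : ℂ} (hz : z ≠ 0) (N : ℕ) :
    (z + z⁻¹ - 2 * c) * ∑ k ∈ Finset.range N, (s (k + 1) : ℂ) * z ^ k =
      s 1 * z⁻¹ + s N * z ^ N - s (N + 1) * z ^ N * z⁻¹ := by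
  induction N with
  | zero => simp [hs₀]
  | succ N ih =>
    have hrec : (s (N + 2) : ℂ) = 2 * c * s (N + 1) - s N := by
      exact_mod_cast eq_sub_of_add_eq (hs N)
    rw [Finset.sum_range_succ, mul_add, ih, hrec]
    field_simp
    ring

lemma cos_sub_mul_expSum (hs₀ : s 0 = 0) (hs : ∀ k, s (k + 2) + s k = 2 * c * s (k + 1))
    {M : ℕ} (hsM : s (M + 1) = 0) (x : ℝ) :
    ((cos (2 * π * x) - c : ℝ) : ℂ) * expSum M (fun k ↦ s (k + 1)) x =
      s 1 / 2 * 𝐞 (-x) + s M / 2 * 𝐞 (M * x) := by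
  have hcos : (cos (2 * π * x) : ℂ) = (𝐞 x + (𝐞 x : ℂ)⁻¹) / 2 := by
    rw [Complex.ofReal_cos, Complex.cos, fourierChar_apply, ← Complex.exp_neg, neg_mul]
  have hpow (k : ℕ) : (𝐞 (k * x) : ℂ) = (𝐞 x : ℂ) ^ k := by
    rw [← nsmul_eq_mul, AddChar.map_nsmul_eq_pow, Circle.coe_pow]
  have htel := path_recurrence_telescope hs₀ hs (Circle.coe_ne_zero (𝐞 x)) M
  simp only [expSum, hpow, AddChar.map_neg_eq_inv, Circle.coe_inv, Complex.ofReal_sub, hcos]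
  rw [hsM, Complex.ofReal_zero, zero_mul, zero_mul, sub_zero] at htel
  linear_combination htel / 2

lemma isNonnegTrigPoly_cos_sub_mul_normSq_expSum (hs₀ : s 0 = 0)
    (hs : ∀ k, s (k + 2) + s k = 2 * c * s (k + 1)) {M : ℕ} (hsM : s (M + 1) = 0)
    (hs_nonneg : ∀ k ≤ M, 0 ≤ s k) :
    IsNonnegTrigPoly M 0
      (fun x ↦ (cos (2 * π * x) - c) * Complex.normSq (expSum M (fun k ↦ s (k + 1)) x)) := by
  let w : ℕ ⊕ ℕ → ℝ := Sum.elim (fun k ↦ s 1 / 2 * s (k + 1)) (fun k ↦ s M / 2 * s (k + 1))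
  let φ : ℕ ⊕ ℕ → ℤ := Sum.elim (fun k ↦ -(k + 1)) (fun k ↦ M - k)
  have hφ : ∀ p ∈ (Finset.range M).disjSum (Finset.range M), φ p ≠ 0 ∧ |φ p| ≤ M := by
    rintro (k | k) hk <;> simp only [Finset.inl_mem_disjSum, Finset.inr_mem_disjSum,
      Finset.mem_range, φ, Sum.elim_inl, Sum.elim_inr, abs_le] at hk ⊢ <;> lia
  have hconst : ∑ p ∈ (Finset.range M).disjSum (Finset.range M) with φ p = 0, w p = 0 := by
    rw [Finset.filter_false_of_mem fun p hp ↦ (hφ p hp).1, Finset.sum_empty]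
  rw [← hconst]
  refine .of_sum (fun p hp ↦ ?_) (fun p hp ↦ (hφ p hp).2) fun x ↦ ?_
  · have hs_one := hs_nonneg 1
    have hs_M := hs_nonneg M le_rfl
    rcases p with k | k <;> simp only [Finset.inl_mem_disjSum, Finset.inr_mem_disjSum,
      Finset.mem_range] at hp
    · exact mul_nonneg (by linarith [hs_one (by lia)]) (hs_nonneg _ hp)
    · exact mul_nonneg (by linarith) (hs_nonneg _ hp)
  · rw [Complex.ofReal_mul, ← Complex.mul_conj, ← mul_assoc, cos_sub_mul_expSum hs₀ hs hsM,
      conj_expSum, add_mul, Finset.mul_sum, Finset.mul_sum, Finset.sum_disjSum]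
    congr 1 <;> refine Finset.sum_congr rfl fun k _ ↦ ?_
    all_goals
      rw [mul_mul_mul_comm, ← Circle.coe_mul, ← AddChar.map_add_eq_mul]
      simp only [w, φ, Sum.elim_inl, Sum.elim_inr]
      push_cast
      ring_nf

end PathEigenvector

section Integral

variable {ι : Type*} [Fintype ι]

/-- `ControlledResonance lam α M Λ` is the arithmetic hypothesis of Chen's theorem: the integer
combinations of `lam` with coefficients bounded by `M` either vanish, in which case the same
combination of `α` is an integer, or have absolute value at least `Λ`. -/
structure ControlledResonance (lam α : ι → ℝ) (M : ℕ) (Λ : ℝ) : Prop where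
  exists_int_eq : ∀ u : ι → ℤ, (∀ j, |u j| ≤ (M : ℤ)) → ∑ j, (u j : ℝ) * lam j = 0 →
    ∃ m : ℤ, ∑ j, (u j : ℝ) * α j = m
  le_abs : ∀ u : ι → ℤ, (∀ j, |u j| ≤ (M : ℤ)) → ∑ j, (u j : ℝ) * lam j ≠ 0 →
    Λ ≤ |∑ j, (u j : ℝ) * lam j|

lemma abs_integral_cos_two_pi_mul_le {μ : ℝ} (hμ : μ ≠ 0) (β a b : ℝ) :
    |∫ t in a..b, cos (2 * π * (μ * t - β))| ≤ 1 / (π * |μ|) := by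
  have hc : 2 * π * μ ≠ 0 := by positivity
  simp only [mul_sub, ← mul_assoc]
  rw [intervalIntegral.integral_comp_mul_sub cos hc, integral_cos, smul_eq_mul, abs_mul, abs_inv,
    abs_mul, abs_of_pos two_pi_pos]
  calc (2 * π * |μ|)⁻¹ * |sin (2 * π * μ * b - 2 * π * β) - sin (2 * π * μ * a - 2 * π * β)|
      ≤ (2 * π * |μ|)⁻¹ * (1 + 1) := by
        gcongr
        exact (abs_sub _ _).trans (add_le_add (abs_sin_le_one _) (abs_sin_le_one _))
    _ = 1 / (π * |μ|) := by field_simp; norm_num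

lemma integral_cos_two_pi_int (m : ℤ) (a b : ℝ) :
    ∫ t in a..b, cos (2 * π * (0 * t - m)) = b - a := by
  have h (t : ℝ) : cos (2 * π * (0 * t - m)) = 1 := by
    rw [show 2 * π * (0 * t - m) = 0 - m * (2 * π) by ring, cos_sub_int_mul_two_pi, cos_zero]
  simp only [h, intervalIntegral.integral_const, smul_eq_mul, mul_one]

lemma ControlledResonance.le_integral_cos {lam α : ι → ℝ} {M : ℕ} {Λ a b : ℝ}
    (h : ControlledResonance lam α M Λ) (hΛ : 0 < Λ) (hab : a ≤ b) {u : ι → ℤ}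
    (hu : ∀ j, |u j| ≤ (M : ℤ)) :
    (if u = 0 then b - a else 0) - 1 / (π * Λ) ≤
      ∫ t in a..b, cos (2 * π * ((∑ j, (u j : ℝ) * lam j) * t - ∑ j, (u j : ℝ) * α j)) := by
  have hloss : 0 ≤ 1 / (π * Λ) := by positivity
  by_cases hμ : ∑ j, (u j : ℝ) * lam j = 0
  · obtain ⟨m, hm⟩ := h.exists_int_eq u hu hμ
    rw [hμ, hm, integral_cos_two_pi_int]
    split_ifs <;> linarith
  · have hu₀ : u ≠ 0 := by
      rintro rfl
      simp at hμ
    have hbound : 1 / (π * |∑ j, (u j : ℝ) * lam j|) ≤ 1 / (π * Λ) := by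
      gcongr
      exact h.le_abs u hu hμ
    rw [if_neg hu₀, zero_sub]
    exact neg_le_of_abs_le ((abs_integral_cos_two_pi_mul_le hμ _ a b).trans hbound)

lemma prod_trigPoly_eq_sum_cos [DecidableEq ι] {s : Finset ℤ} {f : ι → ℝ → ℝ} {c : ι → ℤ → ℝ}
    (hf : ∀ j x, (f j x : ℂ) = ∑ k ∈ s, (c j k : ℂ) * 𝐞 (k * x)) (lam α : ι → ℝ) (t : ℝ) :
    ∏ j, f j (lam j * t - α j) = ∑ u ∈ Fintype.piFinset fun _ ↦ s, (∏ j, c j (u j)) *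
      cos (2 * π * ((∑ j, (u j : ℝ) * lam j) * t - ∑ j, (u j : ℝ) * α j)) := by
  have hphase (u : ι → ℤ) : ∏ j, (𝐞 (u j * (lam j * t - α j)) : ℂ) =
      𝐞 ((∑ j, (u j : ℝ) * lam j) * t - ∑ j, (u j : ℝ) * α j) := by
    simp only [fourierChar_apply]
    rw [← Complex.exp_sum, ← Finset.sum_mul, ← Complex.ofReal_sum, ← Finset.mul_sum,
      Finset.sum_mul, ← Finset.sum_sub_distrib]
    simp only [mul_sub, mul_assoc]
  rw [← Complex.ofReal_re (∏ j, f j (lam j * t - α j)), Complex.ofReal_prod]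
  simp only [hf]
  rw [Finset.prod_univ_sum, Complex.re_sum]
  refine Finset.sum_congr rfl fun u _ ↦ ?_
  rw [Finset.prod_mul_distrib, ← Complex.ofReal_prod, hphase,
    Complex.re_ofReal_mul, fourierChar_apply, Complex.exp_ofReal_mul_I_re]

theorem ControlledResonance.le_integral_prod {lam α : ι → ℝ} {M : ℕ} {Λ a b : ℝ}
    (h : ControlledResonance lam α M Λ) (hΛ : 0 < Λ) (hab : a ≤ b) {f : ι → ℝ → ℝ} {c₀ : ι → ℝ}
    (hf : ∀ j, IsNonnegTrigPoly M (c₀ j) (f j)) :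
    (b - a) * ∏ j, c₀ j - (∏ j, f j 0) / (π * Λ) ≤ ∫ t in a..b, ∏ j, f j (lam j * t - α j) := by
  classical
  choose c hc hc₀ hfc using hf
  have hsum : ∏ j, f j 0 =
      ∑ u ∈ Fintype.piFinset fun _ ↦ Finset.Icc (-M : ℤ) M, ∏ j, c j (u j) := by
    simpa using prod_trigPoly_eq_sum_cos hfc 0 0 0
  have hmain : (b - a) * ∏ j, c₀ j =
      ∑ u ∈ Fintype.piFinset fun _ ↦ Finset.Icc (-M : ℤ) M,
        (∏ j, c j (u j)) * if u = 0 then b - a else 0 := by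
    simp [hc₀, mul_comm]
  simp only [prod_trigPoly_eq_sum_cos hfc]
  rw [intervalIntegral.integral_finsetSum
    fun u _ ↦ Continuous.intervalIntegrable (by fun_prop) _ _, hmain, hsum, Finset.sum_div,
    ← Finset.sum_sub_distrib]
  refine Finset.sum_le_sum fun u hu ↦ ?_
  have hu_le (j : ι) : |u j| ≤ (M : ℤ) :=
    abs_le.mpr (Finset.mem_Icc.mp (Fintype.mem_piFinset.mp hu j))
  rw [intervalIntegral.integral_const_mul, div_eq_mul_one_div, ← mul_sub]
  exact mul_le_mul_of_nonneg_left (h.le_integral_cos hΛ hab hu_le)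
    (Finset.prod_nonneg fun j _ ↦ hc j (u j))

end Integral

section Mean

variable {ι : Type*} [Fintype ι] {lam α : ι → ℝ} {M : ℕ} {Λ a b c C R : ℝ} {K : ℝ → ℝ}

lemma ControlledResonance.integral_cos_sub_mul_prod_pos (h : ControlledResonance lam α M Λ)
    (hΛ : 0 < Λ) (hab : a < b) (hC : 0 < C) (hK : IsNonnegTrigPoly M C K) (hK₀ : K 0 ≤ M * C)
    (hcK : IsNonnegTrigPoly M 0 (fun x ↦ (cos (2 * π * x) - c) * K x)) (hc : c ≤ 1)
    (hR : M ^ Fintype.card ι / (π * (b - a) * Λ) ≤ R) (hR_pos : 0 < R) (hRc : 2 * R < 1 + c)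
    (j : ι) :
    0 < ∫ t in a..b, (cos (2 * π * (lam j * t - α j)) - (c - 2 * R)) *
      ∏ i, K (lam i * t - α i) := by
  classical
  have hba : 0 < b - a := sub_pos.mpr hab
  set n := Fintype.card ι
  let q (i : ι) (x : ℝ) : ℝ := if i = j then cos (2 * π * x) - (c - 2 * R) else 1
  have hq (i : ι) :
      IsNonnegTrigPoly M ((if i = j then 2 * R else 1) * C) (fun x ↦ q i x * K x) := by
    by_cases hij : i = j
    · simpa [q, hij] using hK.sub_sub_const_mul (r := 2 * R) (by positivity) hcK
    · simpa [q, hij] using hK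
  have hlow := h.le_integral_prod hΛ hab.le hq
  simp only [q, Finset.prod_mul_distrib, Finset.prod_ite_eq', Finset.mem_univ, if_true,
    Finset.prod_const, Finset.card_univ, mul_zero, cos_zero] at hlow
  have hK₀_pow : K 0 ^ n ≤ R * (π * (b - a) * Λ) * C ^ n :=
    calc K 0 ^ n ≤ (M * C) ^ n := pow_le_pow_left₀ hK.apply_zero_nonneg hK₀ n
      _ = M ^ n * C ^ n := mul_pow _ _ _
      _ ≤ R * (π * (b - a) * Λ) * C ^ n := by
        gcongr
        exact (div_le_iff₀ (by positivity)).mp hR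
  refine lt_of_lt_of_le ?_ hlow
  calc 0 < (b - a) * C ^ n * (R * (1 + c - 2 * R)) := by
        have : 0 < 1 + c - 2 * R := by linarith
        positivity
    _ = (b - a) * (2 * R * C ^ n) -
          (1 - (c - 2 * R)) * (R * (π * (b - a) * Λ) * C ^ n) / (π * Λ) := by
        field_simp
        ring
    _ ≤ (b - a) * (2 * R * C ^ n) - (1 - (c - 2 * R)) * K 0 ^ n / (π * Λ) := by
        have : 0 ≤ 1 - (c - 2 * R) := by linarith
        gcongr

lemma exists_sum_mul_nonneg_of_integral_pos {δ : ι → ℝ} (hδ : ∀ j, 0 ≤ δ j) (hab : a ≤ b)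
    {g : ι → ℝ → ℝ} (hg : ∀ j, Continuous (g j)) {W : ℝ → ℝ} (hW : Continuous W)
    (hW_nonneg : ∀ t, 0 ≤ W t) (hpos : ∀ j, 0 < ∫ t in a..b, g j t * W t) :
    ∃ t ∈ Icc a b, 0 ≤ ∑ j, δ j * g j t := by
  by_contra! hneg
  obtain ⟨j, -, hj⟩ := Finset.exists_ne_zero_of_sum_ne_zero (hneg a (left_mem_Icc.mpr hab)).ne
  have hδj : 0 < δ j := (hδ j).lt_of_ne' (left_ne_zero_of_mul hj)
  have hint_pos : 0 < ∑ j, δ j * ∫ t in a..b, g j t * W t :=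
    Finset.sum_pos' (fun i _ ↦ mul_nonneg (hδ i) (hpos i).le)
      ⟨j, Finset.mem_univ j, mul_pos hδj (hpos j)⟩
  have hint_eq : ∑ j, δ j * ∫ t in a..b, g j t * W t =
      ∫ t in a..b, (∑ j, δ j * g j t) * W t := by
    simp only [← intervalIntegral.integral_const_mul, Finset.sum_mul, mul_assoc]
    rw [intervalIntegral.integral_finsetSum
      fun j _ ↦ Continuous.intervalIntegrable (by fun_prop) _ _]
  have hint_nonneg : 0 ≤ ∫ t in a..b, -((∑ j, δ j * g j t) * W t) :=
    intervalIntegral.integral_nonneg hab fun t ht ↦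
      neg_nonneg.mpr (mul_nonpos_of_nonpos_of_nonneg (hneg t ht).le (hW_nonneg t))
  rw [intervalIntegral.integral_neg] at hint_nonneg
  linarith

end Mean

section SineKernel

lemma exists_sine_kernel {M : ℕ} (hM : 0 < M) :
    ∃ (K : ℝ → ℝ) (C : ℝ), (∀ x, 0 ≤ K x) ∧ 0 < C ∧ IsNonnegTrigPoly M C K ∧ K 0 ≤ M * C ∧
      IsNonnegTrigPoly M 0 (fun x ↦ (cos (2 * π * x) - cos (π / (M + 1))) * K x) := by
  set θ : ℝ := π / (M + 1) with hθ_def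
  have hθ : (M + 1) * θ = π := by rw [hθ_def]; field_simp
  have hθ_pos : 0 < θ := by positivity
  have hsin_nonneg (k : ℕ) (hk : k ≤ M) : 0 ≤ sin (k * θ) := by
    have hkM : (k : ℝ) ≤ M := by exact_mod_cast hk
    exact sin_nonneg_of_nonneg_of_le_pi (by positivity) (by nlinarith)
  have hsin_one : 0 < sin θ := by
    have hM' : (1 : ℝ) ≤ M := by exact_mod_cast hM
    exact sin_pos_of_pos_of_lt_pi hθ_pos (by nlinarith)
  have hrec (k : ℕ) : sin ((k + 2 : ℕ) * θ) + sin (k * θ) =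
      2 * cos θ * sin ((k + 1 : ℕ) * θ) := by
    rw [mul_right_comm, two_mul_sin_mul_cos, add_comm]
    push_cast
    ring_nf
  refine ⟨fun x ↦ Complex.normSq (expSum M (fun k ↦ sin ((k + 1 : ℕ) * θ)) x),
    ∑ k ∈ Finset.range M, sin ((k + 1 : ℕ) * θ) ^ 2, fun x ↦ Complex.normSq_nonneg _, ?_,
    isNonnegTrigPoly_normSq_expSum fun k hk ↦ hsin_nonneg _ hk, normSq_expSum_zero_le _ _,
    isNonnegTrigPoly_cos_sub_mul_normSq_expSum (s := fun k ↦ sin (k * θ)) (by simp) hrec ?_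
      hsin_nonneg⟩
  · exact Finset.sum_pos' (fun k _ ↦ sq_nonneg _)
      ⟨0, Finset.mem_range.mpr hM, by simpa using pow_pos hsin_one 2⟩
  · rw [Nat.cast_add_one, hθ, sin_pi]

end SineKernel

section Approximation

variable {ι : Type*} [Fintype ι] {lam α δ : ι → ℝ} {M : ℕ} {Λ a b R : ℝ}

lemma ControlledResonance.exists_sum_sq_distNearestInt_le (h : ControlledResonance lam α M Λ)
    (hΛ : 0 < Λ) (hab : a < b) (hδ : ∀ j, 0 ≤ δ j) (hM : 0 < M)
    (hR : M ^ Fintype.card ι / (π * (b - a) * Λ) ≤ R) (hRM : 2 * R < 1 + cos (π / (M + 1))) :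
    ∃ t ∈ Icc a b, ∑ j, δ j * distNearestInt (lam j * t - α j) ^ 2 ≤
      (∑ j, δ j) / 8 * (1 - cos (π / (M + 1)) + 2 * R) := by
  obtain ⟨K, C, hK_nonneg, hC, hK, hK₀, hcK⟩ := exists_sine_kernel hM
  have hR_pos : 0 < R := by
    have : 0 < b - a := sub_pos.mpr hab
    exact lt_of_lt_of_le (by positivity) hR
  have hK_cont := hK.continuous
  obtain ⟨t, ht, hcos⟩ := exists_sum_mul_nonneg_of_integral_pos hδ hab.le
    (g := fun j t ↦ cos (2 * π * (lam j * t - α j)) - (cos (π / (M + 1)) - 2 * R))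
    (fun j ↦ by fun_prop) (W := fun t ↦ ∏ i, K (lam i * t - α i)) (by fun_prop)
    (fun t ↦ Finset.prod_nonneg fun i _ ↦ hK_nonneg _)
    (h.integral_cos_sub_mul_prod_pos hΛ hab hC hK hK₀ hcK (cos_le_one _) hR hR_pos hRM)
  refine ⟨t, ht, ?_⟩
  calc ∑ j, δ j * distNearestInt (lam j * t - α j) ^ 2
      ≤ ∑ j, δ j * ((1 - cos (2 * π * (lam j * t - α j))) / 8) := by
        gcongr with j
        · exact hδ j
        · exact sq_distNearestInt_le _
    _ = (∑ j, δ j) / 8 * (1 - cos (π / (M + 1)) + 2 * R) -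
          (∑ j, δ j * (cos (2 * π * (lam j * t - α j)) - (cos (π / (M + 1)) - 2 * R))) / 8 := by
        rw [Finset.sum_div, Finset.sum_div, Finset.sum_mul, ← Finset.sum_sub_distrib]
        refine Finset.sum_congr rfl fun j _ ↦ ?_
        ring
    _ ≤ (∑ j, δ j) / 8 * (1 - cos (π / (M + 1)) + 2 * R) := by linarith

lemma sum_mul_sq_distNearestInt_le (hδ : ∀ j, 0 ≤ δ j) (x : ι → ℝ) :
    ∑ j, δ j * distNearestInt (x j) ^ 2 ≤ (∑ j, δ j) / 4 := by
  rw [Finset.sum_div]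
  refine Finset.sum_le_sum fun j _ ↦ ?_
  have hsq : distNearestInt (x j) ^ 2 ≤ 1 / 4 := by
    linarith [sq_distNearestInt_le (x j), neg_one_le_cos (2 * π * x j)]
  linarith [mul_le_mul_of_nonneg_left hsq (hδ j)]

lemma sInf_image_sum_mul_sq_distNearestInt_le (hδ : ∀ j, 0 ≤ δ j) {S : Set ℝ} {t : ℝ}
    (ht : t ∈ S) :
    sInf ((fun t ↦ ∑ j, δ j * distNearestInt (lam j * t - α j) ^ 2) '' S) ≤
      ∑ j, δ j * distNearestInt (lam j * t - α j) ^ 2 := by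
  refine csInf_le ⟨0, ?_⟩ ⟨t, ht, rfl⟩
  rintro _ ⟨t, -, rfl⟩
  exact Finset.sum_nonneg fun j _ ↦ mul_nonneg (hδ j) (sq_nonneg _)

theorem chen_diophantine_general (h : ControlledResonance lam α M Λ) (hΛ : 0 < Λ)
    (hδ : ∀ j, 0 ≤ δ j) (hab : a < b) :
    ∃ t ∈ Icc a b, ∑ j, δ j * distNearestInt (lam j * t - α j) ^ 2 ≤
      (∑ j, δ j) / 4 * sin (π / (2 * ((M : ℝ) + 1))) ^ 2 +
      (∑ j, δ j) * (M : ℝ) ^ Fintype.card ι / (4 * π * (b - a) * Λ) := by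
  set R : ℝ := M ^ Fintype.card ι / (π * (b - a) * Λ) with hR
  have hba : 0 < b - a := sub_pos.mpr hab
  have hR_nonneg : 0 ≤ R := by positivity
  have hbound : (∑ j, δ j) / 4 * sin (π / (2 * ((M : ℝ) + 1))) ^ 2 +
      (∑ j, δ j) * (M : ℝ) ^ Fintype.card ι / (4 * π * (b - a) * Λ) =
      (∑ j, δ j) / 8 * (1 - cos (π / (M + 1)) + 2 * R) := by
    have hangle : 2 * (π / (2 * ((M : ℝ) + 1))) = π / (M + 1) := by field_simp
    rw [sin_sq_eq_half_sub, hangle, hR]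
    field_simp
    ring
  rw [hbound]
  by_cases hRM : 2 * R < 1 + cos (π / (M + 1))
  · have hM : 0 < M := Nat.pos_of_ne_zero fun hM ↦ by
      simp only [hM, Nat.cast_zero, zero_add, div_one, cos_pi] at hRM
      linarith
    exact h.exists_sum_sq_distNearestInt_le hΛ hab hδ hM hR.ge hRM
  · refine ⟨a, left_mem_Icc.mpr hab.le, (sum_mul_sq_distNearestInt_le hδ _).trans ?_⟩
    have hδ_sum : 0 ≤ ∑ j, δ j := Finset.sum_nonneg fun j _ ↦ hδ j
    nlinarith

end Approximation

/-- Chen's lemma on simultaneous Diophantine approximation. -/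
theorem chen_diophantine (n : ℕ) (hn : 0 < n) (lam α : Fin n → ℝ) (M : ℕ) (hM : 0 < M)
    (hindep : ∀ u : Fin n → ℤ, (∀ j, |u j| ≤ (M : ℤ)) →
      (∑ j, (u j : ℝ) * lam j) = 0 → ∃ m : ℤ, (∑ j, (u j : ℝ) * α j) = (m : ℝ))
    (Λ : ℝ)
    (hΛ : IsLeast {x : ℝ | ∃ u : Fin n → ℤ, (∀ j, |u j| ≤ (M : ℤ)) ∧
      (∑ j, (u j : ℝ) * lam j) ≠ 0 ∧ x = |∑ j, (u j : ℝ) * lam j|} Λ)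
    (δ : Fin n → ℝ) (hδ : ∀ j, 0 < δ j) (T₁ T₂ : ℝ) (hT : T₁ < T₂) :
    sInf ((fun t => ∑ j, δ j * (distNearestInt (lam j * t - α j)) ^ 2) '' Set.Icc T₁ T₂) ≤
      (∑ j, δ j) / 4 * (Real.sin (π / (2 * ((M : ℝ) + 1)))) ^ 2 +
      (∑ j, δ j) * (M : ℝ) ^ n / (4 * π * (T₂ - T₁) * Λ) := by
  have hΛ_pos : 0 < Λ := by
    obtain ⟨u, -, hu, rfl⟩ := hΛ.1
    exact abs_pos.mpr hu
  obtain ⟨t, ht, hle⟩ := chen_diophantine_general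
    ⟨hindep, fun u hu hne ↦ hΛ.2 ⟨u, hu, hne, rfl⟩⟩ hΛ_pos (fun j ↦ (hδ j).le) hT
  exact (sInf_image_sum_mul_sq_distNearestInt_le (fun j ↦ (hδ j).le) ht).trans (by simpa using hle)
end

section
/- Let σ₀ ∈ (1/2, 1) be fixed and let χ_1, …, χ_k be distinct primitive Dirichlet characters. Then there exists a constant c > 0 such that for all sufficiently large T there exist t_1, …, t_k ∈ [T, 2T] with |t_i − t_j| ≤ 2·(log T)^{(1+σ₀)/2}·(log log T)^{1/2} for all i, j ∈ {1, …, k}, and |L(χ_j, σ₀ + i t_j)| ≥ exp(c·(log T)^{1−σ₀}/log log T) for every j = 1, …, k. -/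
open Real Set

/-!
Let `z` be a small multiple of `log T`. On some residue class modulo the product of the moduli all
the characters are constant, so for each `j` a shift `w j = O(1 / log log T)` can be chosen for
which `χ j p * p ^ (-I * w j)` has real part at least `1 / 2` at every prime `p` of the class that
is close to `z` on the logarithmic scale; let `P` be the set of these primes, which has
cardinality `≫ z / log z`. The resonator `R t = ∏ p ∈ P, (1 + p ^ (-I * t))` concentrates near
points `t` with `p ^ (-I * t) ≈ 1` for many `p ∈ P`. With the mollifier
`M j t = ∏ p ≤ z, (1 - χ j p * p ^ (-σ - I * t))`, the mean square of
`(L (χ j) * M j - 1) (t + w j) * R t` over `[5 * T / 4, 7 * T / 4]` is of smaller order than that of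
`R`, while that of `M j (t + w j) * R t` is smaller by a factor `exp (-κ * z ^ (1 - σ) / log z)`.
Comparing the sum of all these mean squares with that of `R` yields a single `t` such that, for
every `j`, at the point `t + w j` the product `L (χ j) * M j` is close to `1` and `M j` is
exponentially small, so that `L (χ j)` is large there.
-/

section

open MeasureTheory Filter Topology
open Complex (I)

/-- The Fourier transform of the Gaussian weight `exp (-(t / T) ^ 2)` at the frequency `u`. -/
noncomputable def gaussianKernel (T u : ℝ) : ℝ := T * √π * exp (-(T * u) ^ 2 / 4)

lemma gaussianKernel_nonneg {T : ℝ} (hT : 0 < T) (u : ℝ) : 0 ≤ gaussianKernel T u := by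
  unfold gaussianKernel; positivity

lemma gaussianKernel_neg (T u : ℝ) : gaussianKernel T (-u) = gaussianKernel T u := by
  simp only [gaussianKernel, mul_neg, neg_sq]

@[fun_prop]
lemma continuous_gaussianKernel (T : ℝ) : Continuous (gaussianKernel T) := by
  unfold gaussianKernel; fun_prop

lemma gaussianKernel_eq_mul_exp_neg_mul_sq (T : ℝ) :
    gaussianKernel T = fun u ↦ T * √π * exp (-(T ^ 2 / 4) * u ^ 2) := by
  ext u
  rw [gaussianKernel]
  ring_nf

lemma integrable_gaussianKernel {T : ℝ} (hT : 0 < T) : Integrable (gaussianKernel T) := by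
  rw [gaussianKernel_eq_mul_exp_neg_mul_sq]
  exact (integrable_exp_neg_mul_sq (by positivity)).const_mul _

lemma integral_gaussianKernel {T : ℝ} (hT : 0 < T) : ∫ u, gaussianKernel T u = 2 * π := by
  rw [gaussianKernel_eq_mul_exp_neg_mul_sq, integral_const_mul, integral_gaussian,
    show π / (T ^ 2 / 4) = π * (2 / T) ^ 2 by field_simp; norm_num, sqrt_mul pi_pos.le,
    sqrt_sq (by positivity)]
  have hπ : √π * √π = π := mul_self_sqrt pi_pos.le
  field_simp
  linear_combination hπ

lemma norm_exp_neg_ofReal_mul_I (t l : ℝ) : ‖Complex.exp (-(t * l) * I)‖ = 1 := by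
  exact_mod_cast Complex.norm_exp_ofReal_mul_I (-(t * l))

lemma integrable_exp_neg_div_sq {T : ℝ} (hT : 0 < T) :
    Integrable fun t : ℝ ↦ exp (-(t / T) ^ 2) := by
  refine (integrable_exp_neg_mul_sq (b := 1 / T ^ 2) (by positivity)).congr (.of_forall fun t ↦ ?_)
  simp only
  congr 1
  ring

lemma integral_exp_neg_div_sq_mul_exp {T : ℝ} (hT : 0 < T) (u : ℝ) :
    ∫ t : ℝ, (exp (-(t / T) ^ 2) : ℂ) * Complex.exp (-(t * u) * I) = gaussianKernel T u := by
  have hb : 0 < ((1 / T ^ 2 : ℝ) : ℂ).re := by rw [Complex.ofReal_re]; positivity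
  have hsqrt : ((π : ℂ) / ((1 / T ^ 2 : ℝ) : ℂ)) ^ (1 / 2 : ℂ) = (T * √π : ℝ) := by
    rw [← Complex.ofReal_div, show (1 / 2 : ℂ) = (1 / 2 : ℝ) by push_cast; rfl,
      ← Complex.ofReal_cpow (by positivity), ← sqrt_eq_rpow,
      show π / (1 / T ^ 2) = T ^ 2 * π by field_simp, sqrt_mul (by positivity), sqrt_sq hT.le]
  calc ∫ t : ℝ, (exp (-(t / T) ^ 2) : ℂ) * Complex.exp (-(t * u) * I)
      = ∫ t : ℝ, Complex.exp (I * (-u : ℝ) * t) *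
          Complex.exp (-((1 / T ^ 2 : ℝ) : ℂ) * t ^ 2) := by
        congr 1 with t
        rw [Complex.ofReal_exp, mul_comm]
        push_cast
        ring_nf
    _ = gaussianKernel T u := by
        rw [fourierIntegral_gaussian hb, hsqrt, gaussianKernel, Complex.ofReal_mul (T * √π),
          Complex.ofReal_exp]
        push_cast
        field_simp

section GaussianMeanSquare

variable {X : Type*} [MeasurableSpace X] {μ : Measure X} {f : X → ℂ} {l : X → ℝ} {T K : ℝ}

lemma continuous_integral_mul_exp (hf : Integrable f μ) (hl : Measurable l) :
    Continuous fun t : ℝ ↦ ∫ x, f x * Complex.exp (-(t * l x) * I) ∂μ := by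
  refine continuous_of_dominated (bound := fun x ↦ ‖f x‖) (fun t ↦ ?_) (fun t ↦ ?_) hf.norm ?_
  · exact hf.aestronglyMeasurable.mul (Measurable.aestronglyMeasurable (by fun_prop))
  · exact .of_forall fun x ↦ by rw [norm_mul, norm_exp_neg_ofReal_mul_I, mul_one]
  · exact .of_forall fun x ↦ by fun_prop

lemma integrable_exp_neg_div_sq_mul_norm_sq (hT : 0 < T) (hf : Integrable f μ)
    (hl : Measurable l) :
    Integrable fun t : ℝ ↦
      exp (-(t / T) ^ 2) * ‖∫ x, f x * Complex.exp (-(t * l x) * I) ∂μ‖ ^ 2 := by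
  refine (integrable_exp_neg_div_sq hT).mul_bdd (c := (∫ x, ‖f x‖ ∂μ) ^ 2)
    ((continuous_integral_mul_exp hf hl).norm.pow 2).aestronglyMeasurable (.of_forall fun t ↦ ?_)
  rw [norm_pow, norm_norm]
  gcongr
  refine (norm_integral_le_integral_norm _).trans_eq ?_
  simp only [norm_mul, norm_exp_neg_ofReal_mul_I, mul_one]

variable [SFinite μ]

lemma norm_sq_integral_mul_exp (f : X → ℂ) (l : X → ℝ) (t : ℝ) :
    (‖∫ x, f x * Complex.exp (-(t * l x) * I) ∂μ‖ ^ 2 : ℂ) =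
      ∫ p : X × X, f p.1 * starRingEnd ℂ (f p.2) *
        Complex.exp (-(t * (l p.1 - l p.2 : ℝ)) * I) ∂μ.prod μ := by
  rw [← Complex.mul_conj', ← integral_conj, ← integral_prod_mul]
  congr 1 with p
  have hexp : Complex.exp (-(t * (l p.1 - l p.2 : ℝ)) * I) =
      Complex.exp (-(t * l p.1) * I) * starRingEnd ℂ (Complex.exp (-(t * l p.2) * I)) := by
    rw [← Complex.exp_conj, ← Complex.exp_add]
    simp only [map_mul, map_neg, Complex.conj_ofReal, Complex.conj_I]
    push_cast
    ring_nf
  rw [hexp, map_mul]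
  ring

lemma integral_exp_neg_div_sq_mul_norm_sq (hT : 0 < T) (hf : Integrable f μ)
    (hl : Measurable l) :
    ((∫ t : ℝ, exp (-(t / T) ^ 2) *
        ‖∫ x, f x * Complex.exp (-(t * l x) * I) ∂μ‖ ^ 2 : ℝ) : ℂ) =
      ∫ p : X × X, f p.1 * starRingEnd ℂ (f p.2) * gaussianKernel T (l p.1 - l p.2) ∂μ.prod μ := by
  have hconj : Integrable (fun x ↦ starRingEnd ℂ (f x)) μ :=
    Complex.conjLIE.toContinuousLinearEquiv.toContinuousLinearMap.integrable_comp hf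
  have hint : Integrable (Function.uncurry fun (t : ℝ) (p : X × X) ↦
      ((exp (-(t / T) ^ 2) : ℂ) * (f p.1 * starRingEnd ℂ (f p.2))) *
        Complex.exp (-(t * (l p.1 - l p.2 : ℝ)) * I)) (volume.prod (μ.prod μ)) := by
    refine ((integrable_exp_neg_div_sq hT).ofReal.mul_prod (hf.mul_prod hconj)).mul_bdd (c := 1)
      (Measurable.aestronglyMeasurable (by fun_prop)) (.of_forall fun z ↦ ?_)
    exact (norm_exp_neg_ofReal_mul_I _ _).le
  calc ((∫ t : ℝ, exp (-(t / T) ^ 2) *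
        ‖∫ x, f x * Complex.exp (-(t * l x) * I) ∂μ‖ ^ 2 : ℝ) : ℂ)
      = ∫ t : ℝ, ∫ p : X × X, ((exp (-(t / T) ^ 2) : ℂ) * (f p.1 * starRingEnd ℂ (f p.2))) *
          Complex.exp (-(t * (l p.1 - l p.2 : ℝ)) * I) ∂μ.prod μ := by
        rw [← integral_complex_ofReal]
        congr 1 with t
        push_cast [norm_sq_integral_mul_exp]
        simp only [mul_assoc, integral_const_mul]
    _ = ∫ p : X × X, f p.1 * starRingEnd ℂ (f p.2) * gaussianKernel T (l p.1 - l p.2)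
          ∂μ.prod μ := by
        rw [integral_integral_swap hint]
        congr 1 with p
        rw [← integral_exp_neg_div_sq_mul_exp hT, ← integral_const_mul]
        congr 1 with t
        ring

lemma integrable_norm_sq_mul_kernel {k : X → X → ℝ} (hk : Measurable (Function.uncurry k))
    (hk0 : ∀ x y, 0 ≤ k x y) (hki : ∀ x, Integrable (k x) μ) (hkK : ∀ x, ∫ y, k x y ∂μ ≤ K)
    (hf : AEStronglyMeasurable f μ) (hf2 : Integrable (fun x ↦ ‖f x‖ ^ 2) μ) :
    Integrable (fun p : X × X ↦ ‖f p.1‖ ^ 2 * k p.1 p.2) (μ.prod μ) := by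
  have hmeas : AEStronglyMeasurable (fun p : X × X ↦ ‖f p.1‖ ^ 2 * k p.1 p.2) (μ.prod μ) :=
    (hf.comp_fst.norm.pow 2).mul hk.aestronglyMeasurable
  refine (integrable_prod_iff hmeas).2 ⟨.of_forall fun x ↦ (hki x).const_mul (‖f x‖ ^ 2), ?_⟩
  simp only [norm_mul, norm_pow, norm_norm, integral_const_mul]
  refine hf2.mul_bdd (c := K)
    (hk.norm.stronglyMeasurable.integral_prod_right).aestronglyMeasurable (.of_forall fun x ↦ ?_)
  simp only [Real.norm_of_nonneg (hk0 _ _), Real.norm_of_nonneg (integral_nonneg (hk0 x))]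
  exact hkK x

lemma integral_norm_mul_norm_mul_kernel_le {k : X → X → ℝ}
    (hk : Measurable (Function.uncurry k)) (hk0 : ∀ x y, 0 ≤ k x y) (hsymm : ∀ x y, k x y = k y x)
    (hki : ∀ x, Integrable (k x) μ) (hkK : ∀ x, ∫ y, k x y ∂μ ≤ K)
    (hf : AEStronglyMeasurable f μ) (hf2 : Integrable (fun x ↦ ‖f x‖ ^ 2) μ) :
    ∫ p : X × X, ‖f p.1‖ * ‖f p.2‖ * k p.1 p.2 ∂μ.prod μ ≤ K * ∫ x, ‖f x‖ ^ 2 ∂μ := by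
  have hfst := integrable_norm_sq_mul_kernel hk hk0 hki hkK hf hf2
  have hsnd : Integrable (fun p : X × X ↦ ‖f p.2‖ ^ 2 * k p.1 p.2) (μ.prod μ) :=
    hfst.swap.congr (.of_forall fun p ↦ by simp only [Function.comp, Prod.fst_swap, Prod.snd_swap,
      hsymm p.2])
  have hswap : ∫ p : X × X, ‖f p.2‖ ^ 2 * k p.1 p.2 ∂μ.prod μ =
      ∫ p : X × X, ‖f p.1‖ ^ 2 * k p.1 p.2 ∂μ.prod μ := by
    rw [← integral_prod_swap]
    simp only [Prod.fst_swap, Prod.snd_swap, hsymm]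
  calc ∫ p : X × X, ‖f p.1‖ * ‖f p.2‖ * k p.1 p.2 ∂μ.prod μ
      ≤ ∫ p : X × X, (‖f p.1‖ ^ 2 * k p.1 p.2 + ‖f p.2‖ ^ 2 * k p.1 p.2) / 2 ∂μ.prod μ := by
        refine integral_mono_of_nonneg (.of_forall fun p ↦ ?_) ((hfst.add hsnd).div_const 2)
          (.of_forall fun p ↦ ?_)
        · exact mul_nonneg (by positivity) (hk0 _ _)
        · simp only
          linarith [mul_nonneg (sq_nonneg (‖f p.1‖ - ‖f p.2‖)) (hk0 p.1 p.2)]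
    _ = ∫ p : X × X, ‖f p.1‖ ^ 2 * k p.1 p.2 ∂μ.prod μ := by
        rw [integral_div, integral_add hfst hsnd, hswap]
        ring
    _ = ∫ x, ‖f x‖ ^ 2 * ∫ y, k x y ∂μ ∂μ := by
        rw [integral_prod _ hfst]
        simp only [integral_const_mul]
    _ ≤ ∫ x, ‖f x‖ ^ 2 * K ∂μ := by
        refine integral_mono_of_nonneg (.of_forall fun x ↦ ?_) (hf2.mul_const K)
          (.of_forall fun x ↦ ?_)
        · exact mul_nonneg (by positivity) (integral_nonneg (hk0 x))
        · exact mul_le_mul_of_nonneg_left (hkK x) (by positivity)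
    _ = K * ∫ x, ‖f x‖ ^ 2 ∂μ := by rw [integral_mul_const, mul_comm]

/-- The weight `exp (-(t / T) ^ 2)` is at least `exp (-4)` on `[T, 2T]`, so a mean square over
this interval is controlled by the Gaussian one, where Schur's test applies. -/
lemma integral_norm_sq_integral_mul_exp_le (hT : 0 < T) (hf : Integrable f μ)
    (hf2 : Integrable (fun x ↦ ‖f x‖ ^ 2) μ) (hl : Measurable l)
    (hki : ∀ x, Integrable (fun y ↦ gaussianKernel T (l x - l y)) μ)
    (hkK : ∀ x, ∫ y, gaussianKernel T (l x - l y) ∂μ ≤ K) :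
    ∫ t in T..2 * T, ‖∫ x, f x * Complex.exp (-(t * l x) * I) ∂μ‖ ^ 2 ≤
      exp 4 * K * ∫ x, ‖f x‖ ^ 2 ∂μ := by
  set A : ℝ → ℂ := fun t ↦ ∫ x, f x * Complex.exp (-(t * l x) * I) ∂μ
  have hweighted := (integrable_exp_neg_div_sq_mul_norm_sq hT hf hl).const_mul (exp 4)
  have hgauss : ∫ t : ℝ, exp (-(t / T) ^ 2) * ‖A t‖ ^ 2 ≤ K * ∫ x, ‖f x‖ ^ 2 ∂μ := by
    refine le_trans ?_ (integral_norm_mul_norm_mul_kernel_le (by fun_prop)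
      (fun _ _ ↦ gaussianKernel_nonneg hT _) (fun x y ↦ by rw [← gaussianKernel_neg, neg_sub])
      hki hkK hf.aestronglyMeasurable hf2)
    refine (le_norm_self _).trans ?_
    rw [← Complex.norm_real, integral_exp_neg_div_sq_mul_norm_sq hT hf hl]
    refine (norm_integral_le_integral_norm _).trans_eq ?_
    simp only [norm_mul, RCLike.norm_conj, Complex.norm_real,
      Real.norm_of_nonneg (gaussianKernel_nonneg hT _)]
  have hle : ∀ t ∈ Ioc T (2 * T), ‖A t‖ ^ 2 ≤ exp 4 * (exp (-(t / T) ^ 2) * ‖A t‖ ^ 2) := by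
    intro t ht
    rw [← mul_assoc, ← exp_add]
    refine le_mul_of_one_le_left (by positivity) (one_le_exp ?_)
    have h0 : 0 ≤ t / T := div_nonneg (hT.le.trans ht.1.le) hT.le
    have h2 : t / T ≤ 2 := (div_le_iff₀ hT).2 ht.2
    nlinarith
  rw [intervalIntegral.integral_of_le (by linarith)]
  calc ∫ t in Ioc T (2 * T), ‖A t‖ ^ 2
      ≤ ∫ t in Ioc T (2 * T), exp 4 * (exp (-(t / T) ^ 2) * ‖A t‖ ^ 2) :=
        setIntegral_mono_on (((continuous_integral_mul_exp hf hl).norm.pow 2).integrableOn_Ioc)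
          hweighted.integrableOn measurableSet_Ioc hle
    _ ≤ ∫ t : ℝ, exp 4 * (exp (-(t / T) ^ 2) * ‖A t‖ ^ 2) :=
        setIntegral_le_integral hweighted (.of_forall fun t ↦ by positivity)
    _ ≤ exp 4 * K * ∫ x, ‖f x‖ ^ 2 ∂μ := by
        rw [integral_const_mul, mul_assoc]
        gcongr

end GaussianMeanSquare

lemma integral_norm_sq_integral_Ioi_mul_exp_le {f : ℝ → ℂ} {a T : ℝ} (hT : 0 < T)
    (hf : IntegrableOn f (Ioi a)) (hf2 : IntegrableOn (fun v ↦ ‖f v‖ ^ 2) (Ioi a)) :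
    ∫ t in T..2 * T, ‖∫ v in Ioi a, f v * Complex.exp (-(t * v) * I)‖ ^ 2 ≤
      exp 4 * (2 * π) * ∫ v in Ioi a, ‖f v‖ ^ 2 := by
  have hk (x : ℝ) : Integrable fun y ↦ gaussianKernel T (x - y) :=
    (integrable_gaussianKernel hT).comp_sub_left x
  refine integral_norm_sq_integral_mul_exp_le hT hf hf2 measurable_id
    (fun x ↦ (hk x).integrableOn) fun x ↦ ?_
  calc ∫ y in Ioi a, gaussianKernel T (x - y)
      ≤ ∫ y, gaussianKernel T (x - y) :=
        setIntegral_le_integral (hk x) (.of_forall fun _ ↦ gaussianKernel_nonneg hT _)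
    _ = 2 * π := by rw [integral_sub_left_eq_self (gaussianKernel T), integral_gaussianKernel hT]

/-- The completely multiplicative function `n ↦ n ^ (-it)` on the natural numbers. -/
noncomputable def twist (t : ℝ) : ℕ →* ℂ where
  toFun n := (n : ℂ) ^ (-(t * I))
  map_one' := by rw [Nat.cast_one, Complex.one_cpow]
  map_mul' m n := by rw [Nat.cast_mul, Complex.natCast_mul_natCast_cpow]

lemma twist_apply (t : ℝ) (n : ℕ) : twist t n = (n : ℂ) ^ (-(t * I)) := rfl

lemma twist_eq_exp (t : ℝ) {n : ℕ} (hn : n ≠ 0) :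
    twist t n = Complex.exp (-(t * log n) * I) := by
  rw [twist_apply, Complex.cpow_def_of_ne_zero (Nat.cast_ne_zero.2 hn), ← Complex.natCast_log]
  ring_nf

lemma norm_twist (t : ℝ) {n : ℕ} (hn : n ≠ 0) : ‖twist t n‖ = 1 := by
  rw [twist_eq_exp t hn, norm_exp_neg_ofReal_mul_I]

lemma continuous_twist {n : ℕ} (hn : n ≠ 0) : Continuous fun t ↦ twist t n := by
  simp only [twist_eq_exp _ hn]
  fun_prop

lemma twist_add (s t : ℝ) {n : ℕ} (hn : n ≠ 0) : twist (s + t) n = twist s n * twist t n := by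
  simp only [twist_eq_exp _ hn, ← Complex.exp_add]
  push_cast
  ring_nf

lemma conj_twist (t : ℝ) {n : ℕ} (hn : n ≠ 0) : starRingEnd ℂ (twist t n) = twist (-t) n := by
  simp only [twist_eq_exp _ hn, ← Complex.exp_conj, map_mul, map_neg, Complex.conj_ofReal,
    Complex.conj_I]
  push_cast
  ring_nf

lemma cpow_neg_add_mul_I (σ t : ℝ) {n : ℕ} (hn : n ≠ 0) :
    (n : ℂ) ^ (-(σ + t * I)) = (n : ℂ) ^ (-σ : ℂ) * twist t n := by
  rw [twist_apply, neg_add, Complex.cpow_add _ _ (Nat.cast_ne_zero.2 hn)]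

lemma abs_sub_le_mul_abs_log_sub_log {a b X : ℝ} (ha : 0 < a) (hb : 0 < b) (haX : a ≤ X)
    (hbX : b ≤ X) : |a - b| ≤ X * |log a - log b| := by
  wlog hab : a ≤ b generalizing a b
  · rw [abs_sub_comm, abs_sub_comm (log a)]
    exact this hb ha hbX haX (le_of_not_ge hab)
  have hlog : log a ≤ log b := log_le_log ha hab
  rw [abs_sub_comm, abs_sub_comm (log a), abs_of_nonneg (sub_nonneg.2 hab),
    abs_of_nonneg (sub_nonneg.2 hlog)]
  calc b - a = b * (1 - (b / a)⁻¹) := by field_simp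
    _ ≤ b * log (b / a) := by gcongr; exact one_sub_inv_le_log_of_pos (by positivity)
    _ = b * (log b - log a) := by rw [log_div hb.ne' ha.ne']
    _ ≤ X * (log b - log a) := by gcongr

lemma summable_int_exp_neg_sq_div_four : Summable fun k : ℤ ↦ exp (-(k : ℝ) ^ 2 / 4) := by
  refine .of_norm_bounded_eventually
    ((summable_one_div_int_pow (p := 2)).2 one_lt_two |>.mul_left 4) ?_
  filter_upwards [(finite_singleton (0 : ℤ)).eventually_cofinite_notMem] with k hk
  have hk0 : (0 : ℝ) < (k : ℝ) ^ 2 := by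
    have : (k : ℝ) ≠ 0 := by exact_mod_cast hk
    positivity
  rw [Real.norm_of_nonneg (exp_nonneg _), neg_div, exp_neg, mul_one_div, inv_le_comm₀ (exp_pos _)
    (by positivity), inv_div]
  linarith [add_one_le_exp ((k : ℝ) ^ 2 / 4)]

/-- A constant admissible in the mean value theorem for Dirichlet polynomials of length at most
`T` on `[T, 2T]`. -/
noncomputable def meanValueConst : ℝ := exp 4 * √π * ∑' k : ℤ, exp (-(k : ℝ) ^ 2 / 4)

lemma meanValueConst_pos : 0 < meanValueConst := by
  have := summable_int_exp_neg_sq_div_four.tsum_pos (fun _ ↦ exp_nonneg _) 0 (exp_pos _)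
  unfold meanValueConst
  positivity

lemma sum_gaussianKernel_log_sub_log_le {ι : Type*} [Fintype ι] {g : ι → ℕ} {T : ℝ} (hT : 0 < T)
    (hg : Function.Injective g) (hg0 : ∀ i, g i ≠ 0) (hgT : ∀ i, (g i : ℝ) ≤ T) (i : ι) :
    ∑ j, gaussianKernel T (log (g i) - log (g j)) ≤
      T * √π * ∑' k : ℤ, exp (-(k : ℝ) ^ 2 / 4) := by
  have hinj : Function.Injective fun j ↦ (g i : ℤ) - g j := fun a b hab ↦ hg (by
    simp only at hab; lia)
  have hpos (j : ι) : (0 : ℝ) < g j := Nat.cast_pos.2 (Nat.pos_of_ne_zero (hg0 j))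
  simp only [gaussianKernel, ← Finset.mul_sum]
  refine mul_le_mul_of_nonneg_left ?_ (by positivity)
  calc ∑ j, exp (-(T * (log (g i) - log (g j))) ^ 2 / 4)
      ≤ ∑ j, exp (-(((g i : ℤ) - g j : ℤ) : ℝ) ^ 2 / 4) := by
        gcongr ∑ j, exp (-?_ / 4) with j
        rw [sq_le_sq, abs_mul, abs_of_pos hT]
        push_cast
        exact abs_sub_le_mul_abs_log_sub_log (hpos i) (hpos j) (hgT i) (hgT j)
    _ = ∑' j, exp (-(((g i : ℤ) - g j : ℤ) : ℝ) ^ 2 / 4) := (tsum_fintype _).symm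
    _ ≤ ∑' k : ℤ, exp (-(k : ℝ) ^ 2 / 4) :=
        (summable_int_exp_neg_sq_div_four.comp_injective hinj).tsum_le_tsum_of_inj _ hinj
          (fun _ _ ↦ exp_nonneg _) (fun _ ↦ le_rfl) summable_int_exp_neg_sq_div_four

lemma integral_norm_sq_sum_mul_twist_le {ι : Type*} [Fintype ι] {g : ι → ℕ} (c : ι → ℂ) {T : ℝ}
    (hT : 0 < T) (hg : Function.Injective g) (hg0 : ∀ i, g i ≠ 0) (hgT : ∀ i, (g i : ℝ) ≤ T) :
    ∫ t in T..2 * T, ‖∑ i, c i * twist t (g i)‖ ^ 2 ≤ meanValueConst * T * ∑ i, ‖c i‖ ^ 2 := by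
  let _ : MeasurableSpace ι := ⊤
  have h := integral_norm_sq_integral_mul_exp_le (μ := (Measure.count : Measure ι)) (f := c)
    (l := fun i ↦ log (g i)) (K := T * √π * ∑' k : ℤ, exp (-(k : ℝ) ^ 2 / 4)) hT .of_finite
    .of_finite measurable_from_top (fun _ ↦ .of_finite) fun i ↦ by
      rw [integral_count]; exact sum_gaussianKernel_log_sub_log_le hT hg hg0 hgT i
  simp only [integral_count, ← twist_eq_exp _ (hg0 _)] at h
  refine h.trans_eq ?_
  rw [meanValueConst]
  ring

lemma norm_integral_twist_mul_conj_le {m n : ℕ} {X : ℝ} (hm : m ≠ 0) (hn : n ≠ 0) (hmn : m ≠ n)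
    (hmX : m ≤ X) (hnX : n ≤ X) (a b : ℝ) :
    ‖∫ t in a..b, twist t m * starRingEnd ℂ (twist t n)‖ ≤ 2 * X := by
  set δ : ℝ := log n - log m with hδ
  have hexp (t : ℝ) : twist t m * starRingEnd ℂ (twist t n) = Complex.exp (δ * I * t) := by
    rw [conj_twist t hn, twist_eq_exp t hm, twist_eq_exp (-t) hn, ← Complex.exp_add, hδ]
    push_cast
    ring_nf
  have hone : (1 : ℝ) ≤ |(n : ℝ) - m| := by
    exact_mod_cast Int.one_le_abs (sub_ne_zero.2 (Nat.cast_injective.ne hmn.symm))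
  have hsep : 1 ≤ X * |δ| := hone.trans (abs_sub_le_mul_abs_log_sub_log
    (Nat.cast_pos.2 (Nat.pos_of_ne_zero hn)) (Nat.cast_pos.2 (Nat.pos_of_ne_zero hm)) hnX hmX)
  have hδ0 : δ ≠ 0 := fun h ↦ by norm_num [h] at hsep
  have hunit (t : ℝ) : ‖Complex.exp (δ * I * t)‖ = 1 := by
    rw [← hexp, norm_mul, RCLike.norm_conj, norm_twist t hm, norm_twist t hn, one_mul]
  simp only [hexp]
  rw [integral_exp_mul_complex (mul_ne_zero (by exact_mod_cast hδ0) Complex.I_ne_zero), norm_div,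
    norm_mul, Complex.norm_I, mul_one, Complex.norm_real, norm_eq_abs,
    div_le_iff₀ (abs_pos.2 hδ0)]
  calc ‖Complex.exp (δ * I * b) - Complex.exp (δ * I * a)‖ ≤ 1 + 1 := by
        simpa only [hunit] using
          norm_sub_le (Complex.exp (δ * I * b)) (Complex.exp (δ * I * a))
    _ ≤ 2 * X * |δ| := by linarith

lemma integral_norm_sq_sum_mul_twist {ι : Type*} [Fintype ι] {g : ι → ℕ} (c : ι → ℂ)
    (hg0 : ∀ i, g i ≠ 0) (a b : ℝ) :
    ((∫ t in a..b, ‖∑ i, c i * twist t (g i)‖ ^ 2 : ℝ) : ℂ) =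
      ∑ i, ∑ j, c i * starRingEnd ℂ (c j) *
        ∫ t in a..b, twist t (g i) * starRingEnd ℂ (twist t (g j)) := by
  have hcont (i j : ι) : Continuous fun t ↦
      c i * starRingEnd ℂ (c j) * (twist t (g i) * starRingEnd ℂ (twist t (g j))) :=
    continuous_const.mul ((continuous_twist (hg0 i)).mul
      (Complex.continuous_conj.comp (continuous_twist (hg0 j))))
  simp only [← intervalIntegral.integral_const_mul]
  simp_rw [← intervalIntegral.integral_finsetSum fun j _ ↦ (hcont _ j).intervalIntegrable a b]
  rw [← intervalIntegral.integral_finsetSum fun i _ ↦ (continuous_finsetSum _ fun j _ ↦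
    hcont i j).intervalIntegrable a b, ← intervalIntegral.integral_ofReal]
  congr 1 with t
  rw [Complex.ofReal_pow, ← Complex.mul_conj', map_sum, Finset.sum_mul_sum]
  simp only [map_mul, mul_mul_mul_comm]

lemma le_integral_norm_sq_sum_mul_twist {ι : Type*} [Fintype ι] {g : ι → ℕ} (c : ι → ℂ) {X : ℝ}
    (hg : Function.Injective g) (hg0 : ∀ i, g i ≠ 0) (hgX : ∀ i, g i ≤ X) (a b : ℝ) :
    (b - a) * ∑ i, ‖c i‖ ^ 2 - 2 * X * (∑ i, ‖c i‖) ^ 2 ≤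
      ∫ t in a..b, ‖∑ i, c i * twist t (g i)‖ ^ 2 := by
  classical
  let E : ι → ι → ℂ := fun i j ↦ ∫ t in a..b, twist t (g i) * starRingEnd ℂ (twist t (g j))
  have hdiag (i : ι) : E i i = (b - a : ℝ) := by
    simp only [E, Complex.mul_conj', norm_twist _ (hg0 i), Complex.ofReal_one, one_pow,
      intervalIntegral.integral_const, Complex.real_smul, mul_one]
  have hoff (i j : ι) : ‖E i j - if i = j then ((b - a : ℝ) : ℂ) else 0‖ ≤ 2 * X := by
    split_ifs with hij
    · subst hij
      rw [hdiag, sub_self, norm_zero]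
      exact mul_nonneg zero_le_two ((Nat.cast_nonneg _).trans (hgX i))
    · rw [sub_zero]
      exact norm_integral_twist_mul_conj_le (hg0 i) (hg0 j) (hg.ne hij) (hgX i) (hgX j) a b
  have hmain : ((b - a : ℝ) : ℂ) * (∑ i, ‖c i‖ ^ 2 : ℝ) =
      ∑ i, ∑ j, c i * starRingEnd ℂ (c j) * if i = j then ((b - a : ℝ) : ℂ) else 0 := by
    simp only [mul_ite, mul_zero, Finset.sum_ite_eq, Finset.mem_univ, if_true, Complex.mul_conj',
      ← Finset.sum_mul]
    push_cast
    ring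
  have hclose : ‖((∫ t in a..b, ‖∑ i, c i * twist t (g i)‖ ^ 2 : ℝ) : ℂ) -
      (b - a : ℝ) * (∑ i, ‖c i‖ ^ 2 : ℝ)‖ ≤ 2 * X * (∑ i, ‖c i‖) ^ 2 := by
    rw [integral_norm_sq_sum_mul_twist c hg0, hmain, sq, Finset.sum_mul_sum, Finset.mul_sum]
    simp only [← Finset.sum_sub_distrib, ← mul_sub, Finset.mul_sum]
    refine norm_sum_le_of_le _ fun i _ ↦ norm_sum_le_of_le _ fun j _ ↦ ?_
    rw [norm_mul, norm_mul, RCLike.norm_conj, mul_comm]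
    gcongr
    exact hoff i j
  rw [← Complex.ofReal_mul, ← Complex.ofReal_sub, Complex.norm_real] at hclose
  linarith [(abs_le.1 hclose).1]

/-- The finite Euler product `∏ p ∈ P, (1 + r p * p ^ (-it))`. With `‖r p‖ = 1` it is the resonator
of Soundararajan's method. -/
noncomputable def eulerPolynomial (P : Finset ℕ) (r : ℕ → ℂ) (t : ℝ) : ℂ :=
  ∏ p ∈ P, (1 + r p * twist t p)

variable {P Q S : Finset ℕ} {r : ℕ → ℂ}

lemma continuous_eulerPolynomial (hP : ∀ p ∈ P, p.Prime) (r : ℕ → ℂ) :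
    Continuous (eulerPolynomial P r) :=
  continuous_finsetProd _ fun p hp ↦
    continuous_const.add (continuous_const.mul (continuous_twist (hP p hp).ne_zero))

lemma eulerPolynomial_eq_sum (P : Finset ℕ) (r : ℕ → ℂ) (t : ℝ) :
    eulerPolynomial P r t = ∑ A : P.powerset, (∏ p ∈ A.1, r p) * twist t (∏ p ∈ A.1, p) := by
  rw [eulerPolynomial, Finset.prod_one_add, ← Finset.sum_coe_sort]
  simp only [Finset.prod_mul_distrib, map_prod]

lemma norm_eulerPolynomial_le (hP : ∀ p ∈ P, p.Prime) (hr : ∀ p ∈ P, ‖r p‖ = 1) (t : ℝ) :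
    ‖eulerPolynomial P r t‖ ≤ 2 ^ P.card := by
  rw [eulerPolynomial, norm_prod, ← Finset.prod_const]
  refine Finset.prod_le_prod (fun _ _ ↦ norm_nonneg _) fun p hp ↦ (norm_add_le _ _).trans_eq ?_
  rw [norm_one, norm_mul, hr p hp, norm_twist t (hP p hp).ne_zero]
  norm_num

lemma eulerPolynomial_add (hP : ∀ p ∈ P, p.Prime) (r : ℕ → ℂ) (s t : ℝ) :
    eulerPolynomial P r (s + t) = eulerPolynomial P (fun p ↦ r p * twist s p) t :=
  Finset.prod_congr rfl fun p hp ↦ by rw [twist_add s t (hP p hp).ne_zero, mul_assoc]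

lemma injective_prod_powerset (hP : ∀ p ∈ P, p.Prime) :
    Function.Injective fun A : P.powerset ↦ ∏ p ∈ A.1, p := by
  have hprime (A : P.powerset) : ∀ p ∈ A.1, p.Prime :=
    fun p hp ↦ hP p (Finset.mem_powerset.1 A.2 hp)
  intro A B hAB
  apply Subtype.ext
  rw [← Nat.primeFactors_prod (hprime A), ← Nat.primeFactors_prod (hprime B)]
  exact congrArg Nat.primeFactors hAB

lemma le_integral_norm_sq_eulerPolynomial (hP : ∀ p ∈ P, p.Prime) (hr : ∀ p ∈ P, ‖r p‖ = 1)
    (a b : ℝ) :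
    (b - a) * 2 ^ P.card - 2 * (∏ p ∈ P, p : ℕ) * 4 ^ P.card ≤
      ∫ t in a..b, ‖eulerPolynomial P r t‖ ^ 2 := by
  have hsub (A : P.powerset) : A.1 ⊆ P := Finset.mem_powerset.1 A.2
  have hcoeff (A : P.powerset) : ‖∏ p ∈ A.1, r p‖ = 1 := by
    rw [norm_prod]
    exact Finset.prod_eq_one fun p hp ↦ hr p (hsub A hp)
  simp only [eulerPolynomial_eq_sum]
  refine le_trans (le_of_eq ?_) (le_integral_norm_sq_sum_mul_twist (X := (∏ p ∈ P, p : ℕ)) _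
    (injective_prod_powerset hP)
    (fun A ↦ Finset.prod_ne_zero_iff.2 fun p hp ↦ (hP p (hsub A hp)).ne_zero)
    (fun A ↦ Nat.cast_le.2 (Finset.prod_le_prod_of_subset_of_one_le' (hsub A)
      fun p hp _ ↦ (hP p hp).one_le)) a b)
  simp only [hcoeff, one_pow, Finset.sum_const, Finset.card_univ, Fintype.card_coe,
    Finset.card_powerset, nsmul_eq_mul, mul_one]
  push_cast
  rw [← pow_mul, mul_comm P.card 2, pow_mul]
  norm_num

section EulerProduct

variable {d : ℕ}

lemma factorization_mul_prod_pow (hP : ∀ p ∈ P, p.Prime) {m : ℕ} (hm : m ≠ 0)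
    (hmP : ∀ p ∈ P, ¬p ∣ m) (e : P → ℕ) (p : P) :
    (m * ∏ q : P, (q : ℕ) ^ e q).factorization p = e p := by
  have hpow (q : P) : (q : ℕ) ^ e q ≠ 0 := pow_ne_zero _ (hP q q.2).ne_zero
  rw [Nat.factorization_mul hm (Finset.prod_ne_zero_iff.2 fun q _ ↦ hpow q),
    Nat.factorization_prod fun q _ ↦ hpow q, Finsupp.add_apply,
    Nat.factorization_eq_zero_of_not_dvd (hmP p p.2), zero_add, Finsupp.finsetSum_apply,
    Finset.sum_eq_single_of_mem p (Finset.mem_univ p), (hP p p.2).factorization_pow,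
    Finsupp.single_eq_same]
  intro q _ hqp
  rw [(hP q q.2).factorization_pow, Finsupp.single_eq_of_ne fun h ↦ hqp (Subtype.ext h.symm)]

lemma injective_mul_prod_pow (hP : ∀ p ∈ P, p.Prime) (hS0 : ∀ n ∈ S, n ≠ 0)
    (hSP : ∀ n ∈ S, ∀ p ∈ P, ¬p ∣ n) :
    Function.Injective fun y : S × (P → Fin d) ↦ (y.1 : ℕ) * ∏ p : P, (p : ℕ) ^ (y.2 p : ℕ) := by
  rintro ⟨m, e⟩ ⟨n, e'⟩ h
  have he : e = e' := funext fun p ↦ Fin.ext <| by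
    rw [← factorization_mul_prod_pow hP (hS0 m m.2) (hSP m m.2) (fun q ↦ e q) p,
      ← factorization_mul_prod_pow hP (hS0 n n.2) (hSP n n.2) (fun q ↦ e' q) p]
    exact congrArg (fun k ↦ k.factorization p) h
  subst he
  have hne : ∏ p : P, (p : ℕ) ^ (e p : ℕ) ≠ 0 :=
    Finset.prod_ne_zero_iff.2 fun p _ ↦ pow_ne_zero _ (hP p p.2).ne_zero
  exact Prod.ext (Subtype.ext (Nat.eq_of_mul_eq_mul_right (Nat.pos_of_ne_zero hne) h)) rfl

lemma sum_mul_twist_mul_prod_sum (S P : Finset ℕ) (b : ℕ → ℂ) (f : ℕ → Fin d → ℂ) (t : ℝ) :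
    (∑ n ∈ S, b n * twist t n) * ∏ p ∈ P, ∑ e, f p e * twist t p ^ (e : ℕ) =
      ∑ y : S × (P → Fin d), (b y.1 * ∏ p : P, f p (y.2 p)) *
        twist t ((y.1 : ℕ) * ∏ p : P, (p : ℕ) ^ (y.2 p : ℕ)) := by
  rw [Fintype.sum_prod_type, ← Finset.sum_coe_sort, ← Finset.prod_coe_sort, Finset.prod_univ_sum,
    Fintype.piFinset_univ, Finset.sum_mul_sum]
  simp only [map_mul, map_prod, map_pow, Finset.prod_mul_distrib, mul_mul_mul_comm]

lemma sum_norm_sq_mul_prod (S P : Finset ℕ) (b : ℕ → ℂ) (f : ℕ → Fin d → ℂ) :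
    ∑ y : S × (P → Fin d), ‖b y.1 * ∏ p : P, f p (y.2 p)‖ ^ 2 =
      (∑ n ∈ S, ‖b n‖ ^ 2) * ∏ p ∈ P, ∑ e, ‖f p e‖ ^ 2 := by
  rw [Fintype.sum_prod_type, ← Finset.sum_coe_sort S, ← Finset.prod_coe_sort P,
    Finset.prod_univ_sum, Fintype.piFinset_univ, Finset.sum_mul_sum]
  simp only [norm_mul, mul_pow, norm_prod, Finset.prod_pow]

lemma integral_norm_sq_sum_mul_prod_sum_le (hP : ∀ p ∈ P, p.Prime) (hS0 : ∀ n ∈ S, n ≠ 0)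
    (hSP : ∀ n ∈ S, ∀ p ∈ P, ¬p ∣ n) {T : ℝ} (hT : 0 < T)
    (hle : ∀ n ∈ S, (n * (∏ p ∈ P, p) ^ d : ℕ) ≤ T) (b : ℕ → ℂ) (f : ℕ → Fin (d + 1) → ℂ) :
    ∫ t in T..2 * T,
        ‖(∑ n ∈ S, b n * twist t n) * ∏ p ∈ P, ∑ e, f p e * twist t p ^ (e : ℕ)‖ ^ 2 ≤
      meanValueConst * T * ((∑ n ∈ S, ‖b n‖ ^ 2) * ∏ p ∈ P, ∑ e, ‖f p e‖ ^ 2) := by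
  simp only [sum_mul_twist_mul_prod_sum, ← sum_norm_sq_mul_prod]
  refine integral_norm_sq_sum_mul_twist_le _ hT (injective_mul_prod_pow hP hS0 hSP) (fun y ↦ ?_)
    fun y ↦ (hle y.1 y.1.2).trans' ?_
  · exact mul_ne_zero (hS0 y.1 y.1.2)
      (Finset.prod_ne_zero_iff.2 fun p _ ↦ pow_ne_zero _ (hP p p.2).ne_zero)
  · rw [Nat.cast_le, ← Finset.prod_coe_sort P (fun p ↦ p), ← Finset.prod_pow]
    exact Nat.mul_le_mul_left _ (Finset.prod_le_prod' fun p _ ↦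
      Nat.pow_le_pow_right (hP p p.2).pos (Nat.lt_succ_iff.1 (y.2 p).2))

end EulerProduct

lemma sum_range_natCast_add {M : ℕ} [NeZero M] (Φ : ZMod M → ℂ) (b : ℕ) :
    ∑ k ∈ Finset.range M, Φ (b + k : ℕ) = ∑ a, Φ a := by
  calc ∑ k ∈ Finset.range M, Φ (b + k : ℕ) = ∑ a : ZMod M, Φ (b + a) :=
        Finset.sum_nbij' (fun k ↦ (k : ZMod M)) ZMod.val (fun _ _ ↦ Finset.mem_univ _)
          (fun a _ ↦ Finset.mem_range.2 (ZMod.val_lt a))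
          (fun _ hk ↦ ZMod.val_cast_of_lt (Finset.mem_range.1 hk))
          (fun a _ ↦ ZMod.natCast_zmod_val a) (fun _ _ ↦ by rw [Nat.cast_add])
    _ = ∑ a, Φ a := Equiv.sum_comp (Equiv.addLeft (b : ZMod M)) Φ

/-- The mean value of an arithmetic function of period `M`. -/
noncomputable def periodMean {M : ℕ} [NeZero M] (Φ : ZMod M → ℂ) : ℂ := (∑ a, Φ a) / M

section Periodic

variable {M : ℕ} [NeZero M] {Φ : ZMod M → ℂ}

lemma norm_periodMean_le (hΦ : ∀ a, ‖Φ a‖ ≤ 1) : ‖periodMean Φ‖ ≤ 1 := by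
  have hM : (0 : ℝ) < M := Nat.cast_pos.2 (NeZero.pos M)
  rw [periodMean, norm_div, Complex.norm_natCast, div_le_one hM]
  refine (norm_sum_le_of_le _ fun a _ ↦ hΦ a).trans_eq ?_
  rw [Finset.sum_const, Finset.card_univ, ZMod.card, nsmul_one]

/-- The discrepancy is `M`-periodic in `n`, and trivially at most `2n`. -/
lemma norm_sum_range_sub_periodMean_mul_le (hΦ : ∀ a, ‖Φ a‖ ≤ 1) (b n : ℕ) :
    ‖∑ k ∈ Finset.range n, Φ (b + k : ℕ) - periodMean Φ * n‖ ≤ 2 * M := by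
  have hper : Function.Periodic
      (fun n : ℕ ↦ ∑ k ∈ Finset.range n, Φ (b + k : ℕ) - periodMean Φ * n) M := by
    intro n
    have hshift : ∑ k ∈ Finset.range M, Φ (b + (n + k) : ℕ) = periodMean Φ * M := by
      simp only [← add_assoc]
      rw [sum_range_natCast_add, periodMean, div_mul_cancel₀ _ (NeZero.ne _)]
    simp only [Finset.sum_range_add, hshift]
    push_cast
    ring
  rw [← hper.map_mod_nat n]
  have hlt : ((n % M : ℕ) : ℝ) ≤ M := Nat.cast_le.2 (Nat.mod_lt n (NeZero.pos M)).le
  have hsum : ‖∑ k ∈ Finset.range (n % M), Φ (b + k : ℕ)‖ ≤ (n % M : ℕ) := by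
    refine (norm_sum_le_of_le _ fun _ _ ↦ hΦ _).trans_eq ?_
    rw [Finset.sum_const, Finset.card_range, nsmul_one]
  have hmean : ‖periodMean Φ * (n % M : ℕ)‖ ≤ (n % M : ℕ) := by
    rw [norm_mul, Complex.norm_natCast]
    exact mul_le_of_le_one_left (Nat.cast_nonneg _) (norm_periodMean_le hΦ)
  exact (norm_sub_le _ _).trans (by linarith)

end Periodic

/-- The discrepancy between the sum of `a` over `(m, u]` and the linear main term `c * (u - m)`. -/
noncomputable def sumRemainder (a : ℕ → ℂ) (c : ℂ) (m : ℕ) (u : ℝ) : ℂ :=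
  ∑ n ∈ Finset.Ioc m ⌊u⌋₊, a n - c * (u - m)

lemma measurable_sumRemainder (a : ℕ → ℂ) (c : ℂ) (m : ℕ) : Measurable (sumRemainder a c m) := by
  have hsum : Measurable fun u : ℝ ↦ ∑ n ∈ Finset.Ioc m ⌊u⌋₊, a n :=
    (measurable_from_top (f := fun k : ℕ ↦ ∑ n ∈ Finset.Ioc m k, a n)).comp Nat.measurable_floor
  exact hsum.sub (by fun_prop)

lemma norm_sumRemainder_le {M : ℕ} [NeZero M] {Φ : ZMod M → ℂ} (hΦ : ∀ a, ‖Φ a‖ ≤ 1) {m : ℕ}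
    {u : ℝ} (hu : m ≤ u) : ‖sumRemainder (fun n ↦ Φ n) (periodMean Φ) m u‖ ≤ 3 * M := by
  have hu0 : 0 ≤ u := (Nat.cast_nonneg m).trans hu
  have hm : m ≤ ⌊u⌋₊ := Nat.le_floor hu
  have hM : (1 : ℝ) ≤ M := Nat.one_le_cast.2 (NeZero.pos M)
  have hIoc : ∑ n ∈ Finset.Ioc m ⌊u⌋₊, Φ n = ∑ k ∈ Finset.range (⌊u⌋₊ - m), Φ (m + 1 + k : ℕ) := by
    rw [← Finset.Ico_add_one_add_one_eq_Ioc, Finset.sum_Ico_eq_sum_range, Nat.add_sub_add_right]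
  have hfract : ‖periodMean Φ * (u - ⌊u⌋₊)‖ ≤ 1 := by
    rw [norm_mul]
    refine mul_le_one₀ (norm_periodMean_le hΦ) (norm_nonneg _) ?_
    rw [← Complex.ofReal_natCast, ← Complex.ofReal_sub, Complex.norm_real,
      Real.norm_of_nonneg (sub_nonneg.2 (Nat.floor_le hu0))]
    linarith [Nat.lt_floor_add_one u]
  have hsum := norm_sum_range_sub_periodMean_mul_le hΦ (m + 1) (⌊u⌋₊ - m)
  rw [Nat.cast_sub hm, ← hIoc] at hsum
  calc ‖sumRemainder (fun n ↦ Φ n) (periodMean Φ) m u‖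
      = ‖(∑ n ∈ Finset.Ioc m ⌊u⌋₊, Φ n - periodMean Φ * (⌊u⌋₊ - m)) -
          periodMean Φ * (u - ⌊u⌋₊)‖ := by
        rw [sumRemainder]
        ring_nf
    _ ≤ 2 * M + 1 := (norm_sub_le _ _).trans (add_le_add hsum hfract)
    _ ≤ 3 * M := by linarith

lemma LSeries_eq_sum_Icc_add {a : ℕ → ℂ} {s : ℂ} (hs : LSeriesSummable a s) (m : ℕ) :
    LSeries a s = ∑ n ∈ Finset.Icc 1 m, a n * (n : ℂ) ^ (-s) +
      LSeries (fun n ↦ if n ≤ m then 0 else a n) s := by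
  rw [LSeries, ← hs.sum_add_tsum_compl (s := Finset.Icc 1 m), tsum_subtype]
  congr 1
  · refine Finset.sum_congr rfl fun n hn ↦ ?_
    have hn0 : n ≠ 0 := (Nat.one_le_iff_ne_zero.1 (Finset.mem_Icc.1 hn).1)
    rw [LSeries.term_of_ne_zero hn0, Complex.cpow_neg, div_eq_mul_inv]
  · refine tsum_congr fun n ↦ ?_
    simp only [indicator, mem_compl_iff, Finset.coe_Icc, mem_Icc, LSeries.term_def]
    rcases eq_or_ne n 0 with rfl | hn
    · simp only [if_true, ite_self]
    · simp only [hn, if_false, Nat.one_le_iff_ne_zero, ne_eq, not_false_eq_true, true_and]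
      split_ifs <;> simp_all

lemma sub_mul_cpow_neg_sub_one {u : ℝ} (hu : u ≠ 0) (m s : ℂ) :
    (u - m) * (u : ℂ) ^ (-s - 1) = (u : ℂ) ^ (-s) - m * (u : ℂ) ^ (-s - 1) := by
  have hu0 : (u : ℂ) ≠ 0 := Complex.ofReal_ne_zero.2 hu
  rw [sub_mul, Complex.cpow_sub _ _ hu0, Complex.cpow_one, mul_div_cancel₀ _ hu0]

lemma integrableOn_Ioi_sub_mul_cpow {m : ℝ} (hm : 0 < m) {s : ℂ} (hs : 1 < s.re) :
    IntegrableOn (fun u : ℝ ↦ (u - m : ℂ) * (u : ℂ) ^ (-s - 1)) (Ioi m) := by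
  refine IntegrableOn.congr_fun (f := fun u : ℝ ↦ (u : ℂ) ^ (-s) - m * (u : ℂ) ^ (-s - 1))
    (.sub (integrableOn_Ioi_cpow_of_lt ?_ hm)
      ((integrableOn_Ioi_cpow_of_lt ?_ hm).const_mul _))
    (fun u hu ↦ (sub_mul_cpow_neg_sub_one (hm.trans hu).ne' m s).symm) measurableSet_Ioi <;>
  simp only [Complex.sub_re, Complex.neg_re, Complex.one_re] <;> linarith

lemma integral_Ioi_sub_mul_cpow {m : ℝ} (hm : 0 < m) {s : ℂ} (hs : 1 < s.re) :
    ∫ u in Ioi m, (u - m : ℂ) * (u : ℂ) ^ (-s - 1) = (m : ℂ) ^ (1 - s) / (s - 1) / s := by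
  have hs0 : s ≠ 0 := fun h ↦ by norm_num [h] at hs
  have hs1 : 1 - s ≠ 0 := fun h ↦ by norm_num [← sub_eq_zero.1 h] at hs
  have hm0 : (m : ℂ) ≠ 0 := Complex.ofReal_ne_zero.2 hm.ne'
  have hre1 : (-s).re < -1 := by rw [Complex.neg_re]; linarith
  have hre2 : (-s - 1).re < -1 := by rw [Complex.sub_re, Complex.neg_re, Complex.one_re]; linarith
  rw [setIntegral_congr_fun measurableSet_Ioi
      fun u hu ↦ sub_mul_cpow_neg_sub_one (hm.trans hu).ne' m s,
    integral_sub (integrableOn_Ioi_cpow_of_lt hre1 hm)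
      ((integrableOn_Ioi_cpow_of_lt hre2 hm).const_mul _),
    integral_const_mul, integral_Ioi_cpow_of_lt hre1 hm, integral_Ioi_cpow_of_lt hre2 hm,
    show -s + 1 = 1 - s by ring, sub_add_cancel, sub_eq_add_neg 1 s, Complex.cpow_add _ _ hm0,
    Complex.cpow_one, ← sub_eq_add_neg, ← neg_sub 1 s]
  field_simp
  ring

lemma integrableOn_cpow_mul {m : ℝ} (hm : 0 < m) {A : ℝ → ℂ} (hA : Measurable A) {B : ℝ}
    (hAB : ∀ u ∈ Ioi m, ‖A u‖ ≤ B) {s : ℂ} (hs : 0 < s.re) :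
    IntegrableOn (fun u : ℝ ↦ (u : ℂ) ^ (-s - 1) * A u) (Ioi m) := by
  refine (integrableOn_Ioi_cpow_of_lt ?_ hm).mul_bdd hA.aestronglyMeasurable
    ((ae_restrict_iff' measurableSet_Ioi).2 (.of_forall hAB))
  rw [Complex.sub_re, Complex.neg_re, Complex.one_re]
  linarith

lemma LSeries_ite_le_eq_mul_integral {a : ℕ → ℂ} (ha : ∀ n, ‖a n‖ ≤ 1) {m : ℕ} (hm : m ≠ 0)
    {s : ℂ} (hs : 1 < s.re) :
    LSeries (fun n ↦ if n ≤ m then 0 else a n) s =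
      s * ∫ u in Ioi (m : ℝ), (∑ n ∈ Finset.Ioc m ⌊u⌋₊, a n) * (u : ℂ) ^ (-s - 1) := by
  have hm1 : (1 : ℝ) ≤ m := Nat.one_le_cast.2 (Nat.one_le_iff_ne_zero.2 hm)
  have hle (n : ℕ) : ‖if n ≤ m then 0 else a n‖ ≤ 1 := by
    split_ifs
    exacts [norm_zero.trans_le zero_le_one, ha n]
  have hbigO : (fun n ↦ ∑ k ∈ Finset.Icc 1 n, ‖if k ≤ m then 0 else a k‖) =O[atTop]
      fun n ↦ (n : ℝ) ^ (1 : ℝ) := by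
    refine .of_norm_le fun n ↦ ?_
    rw [rpow_one, Real.norm_of_nonneg (Finset.sum_nonneg fun _ _ ↦ norm_nonneg _)]
    refine (Finset.sum_le_sum fun k _ ↦ hle k).trans_eq ?_
    rw [Finset.sum_const, Nat.card_Icc, nsmul_one, Nat.add_sub_cancel]
  have hsum (N : ℕ) :
      ∑ k ∈ Finset.Icc 1 N, (if k ≤ m then 0 else a k) = ∑ k ∈ Finset.Ioc m N, a k := by
    rw [Finset.sum_ite, Finset.sum_const_zero, zero_add]
    congr 1 with k
    simp only [Finset.mem_filter, Finset.mem_Icc, Finset.mem_Ioc]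
    omega
  rw [LSeries_eq_mul_integral' _ zero_le_one hs hbigO]
  simp only [hsum, neg_add']
  rw [setIntegral_eq_of_subset_of_forall_sdiff_eq_zero measurableSet_Ioi (Ioi_subset_Ioi hm1)]
  rintro u ⟨-, hu⟩
  rw [Finset.Ioc_eq_empty_of_le (Nat.floor_le_of_le (not_lt.1 hu)), Finset.sum_empty, zero_mul]

lemma LSeries_eq_sum_add_integral {a : ℕ → ℂ} (ha : ∀ n, ‖a n‖ ≤ 1) {m : ℕ} (hm : m ≠ 0) (c : ℂ)
    {B : ℝ} (hB : ∀ u ∈ Ioi (m : ℝ), ‖sumRemainder a c m u‖ ≤ B) {s : ℂ} (hs : 1 < s.re) :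
    LSeries a s = ∑ n ∈ Finset.Icc 1 m, a n * (n : ℂ) ^ (-s) + c * (m : ℂ) ^ (1 - s) / (s - 1) +
      s * ∫ u in Ioi (m : ℝ), (u : ℂ) ^ (-s - 1) * sumRemainder a c m u := by
  have hm0 : (0 : ℝ) < m := Nat.cast_pos.2 (Nat.pos_of_ne_zero hm)
  have hs0 : s ≠ 0 := fun h ↦ by norm_num [h] at hs
  have hsplit (u : ℝ) : (∑ n ∈ Finset.Ioc m ⌊u⌋₊, a n) * (u : ℂ) ^ (-s - 1) =
      (u : ℂ) ^ (-s - 1) * sumRemainder a c m u +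
        c * ((u - (m : ℝ) : ℂ) * (u : ℂ) ^ (-s - 1)) := by
    rw [sumRemainder, Complex.ofReal_natCast]
    ring
  rw [LSeries_eq_sum_Icc_add (LSeriesSummable_of_bounded_of_one_lt_re (fun n _ ↦ ha n) hs) m,
    LSeries_ite_le_eq_mul_integral ha hm hs]
  simp only [hsplit]
  rw [integral_add (integrableOn_cpow_mul hm0 (measurable_sumRemainder a c m) hB (by linarith))
      ((integrableOn_Ioi_sub_mul_cpow hm0 hs).const_mul c),
    integral_const_mul, integral_Ioi_sub_mul_cpow hm0 hs, Complex.ofReal_natCast]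
  field_simp
  ring

lemma differentiableAt_integral_cpow_mul {m : ℝ} (hm : 0 < m) {A : ℝ → ℂ} (hA : Measurable A)
    {B : ℝ} (hAB : ∀ u ∈ Ioi m, ‖A u‖ ≤ B) {s : ℂ} (hs : 0 < s.re) :
    DifferentiableAt ℂ (fun s ↦ ∫ u in Ioi m, (u : ℂ) ^ (-s - 1) * A u) s := by
  set f : ℝ → ℂ := (Ioi m).indicator A
  have hf (u : ℝ) : ‖f u‖ ≤ |B| := by
    rw [norm_indicator_eq_indicator_norm]
    exact indicator_apply_le' (fun hu ↦ (hAB u hu).trans (le_abs_self B)) fun _ ↦ abs_nonneg B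
  have hmellin : (fun s ↦ ∫ u in Ioi m, (u : ℂ) ^ (-s - 1) * A u) = fun s ↦ mellin f (-s) := by
    funext s
    have hmul (u : ℝ) : (u : ℂ) ^ (-s - 1) * f u =
        (Ioi m).indicator (fun u : ℝ ↦ (u : ℂ) ^ (-s - 1) * A u) u :=
      (indicator_mul_right _ (fun u : ℝ ↦ (u : ℂ) ^ (-s - 1)) A).symm
    simp only [mellin, smul_eq_mul, hmul]
    rw [setIntegral_indicator measurableSet_Ioi, Ioi_inter_Ioi, sup_eq_right.2 hm.le]
  have hvanish : f =ᶠ[nhdsWithin 0 (Ioi 0)] 0 := by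
    filter_upwards [nhdsWithin_le_nhds (Iio_mem_nhds hm)] with u hu
    exact indicator_of_notMem (notMem_Ioi.2 (le_of_lt hu)) A
  rw [hmellin]
  refine DifferentiableAt.comp (f := fun s : ℂ ↦ -s) s
    (mellin_differentiableAt_of_isBigO_rpow (a := 0) (b := -s.re - 1) ?_ ?_ ?_ ?_ ?_)
    differentiableAt_id.neg
  · exact ((locallyIntegrable_const |B|).mono (hA.indicator measurableSet_Ioi).aestronglyMeasurable
      (.of_forall fun u ↦ (hf u).trans (le_abs_self _))).locallyIntegrableOn _
  · refine .of_bound |B| (.of_forall fun u ↦ ?_)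
    simpa only [neg_zero, rpow_zero, norm_one, mul_one] using hf u
  · rwa [Complex.neg_re, neg_lt_zero]
  · exact hvanish.trans_isBigO (Asymptotics.isBigO_zero _ _)
  · rw [Complex.neg_re]
    linarith

lemma continuous_integral_Ioi_cpow_mul {m : ℝ} (hm : 0 < m) {A : ℝ → ℂ} (hA : Measurable A)
    {B : ℝ} (hAB : ∀ u ∈ Ioi m, ‖A u‖ ≤ B) {σ : ℝ} (hσ : 0 < σ) :
    Continuous fun t : ℝ ↦ ∫ u in Ioi m, (u : ℂ) ^ (-(σ + t * I) - 1) * A u := by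
  refine continuous_iff_continuousAt.2 fun t ↦ ?_
  have hs : 0 < (σ + t * I : ℂ).re := by simpa using hσ
  exact (differentiableAt_integral_cpow_mul hm hA hAB hs).continuousAt.comp
    (f := fun t : ℝ ↦ (σ + t * I : ℂ)) (by fun_prop)

section ApproximateFormula

variable {M m : ℕ} [NeZero M] {Φ : ZMod M → ℂ}

lemma LFunction_eq_sum_add_integral (hΦ : ∀ a, ‖Φ a‖ ≤ 1) (hm : m ≠ 0) {s : ℂ} (hre : 0 < s.re)
    (him : 0 < s.im) :
    ZMod.LFunction Φ s = ∑ n ∈ Finset.Icc 1 m, Φ n * (n : ℂ) ^ (-s) +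
      periodMean Φ * (m : ℂ) ^ (1 - s) / (s - 1) +
      s * ∫ u in Ioi (m : ℝ),
        (u : ℂ) ^ (-s - 1) * sumRemainder (fun n ↦ Φ n) (periodMean Φ) m u := by
  have hB : ∀ u ∈ Ioi (m : ℝ), ‖sumRemainder (fun n ↦ Φ n) (periodMean Φ) m u‖ ≤ 3 * M :=
    fun u hu ↦ norm_sumRemainder_le hΦ (le_of_lt hu)
  have hU : IsOpen {s : ℂ | 0 < s.re ∧ 0 < s.im} :=
    (Complex.isOpen_re_gt 0).inter (Complex.isOpen_im_gt 0)
  have hUc : Convex ℝ {s : ℂ | 0 < s.re ∧ 0 < s.im} :=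
    (convex_halfSpace_re_gt 0).inter (convex_halfSpace_im_gt 0)
  have hne {s : ℂ} (hs : 0 < s.im) : s ≠ 1 := fun h ↦ by norm_num [h] at hs
  refine AnalyticOnNhd.eqOn_of_preconnected_of_eventuallyEq
    (f := ZMod.LFunction Φ)
    (g := fun s ↦ ∑ n ∈ Finset.Icc 1 m, Φ n * (n : ℂ) ^ (-s) +
      periodMean Φ * (m : ℂ) ^ (1 - s) / (s - 1) +
      s * ∫ u in Ioi (m : ℝ),
        (u : ℂ) ^ (-s - 1) * sumRemainder (fun n ↦ Φ n) (periodMean Φ) m u)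
    (z₀ := 2 + I)
    (DifferentiableOn.analyticOnNhd (fun s hs ↦ ?_) hU)
    (DifferentiableOn.analyticOnNhd (fun s hs ↦ ?_) hU) hUc.isPreconnected ?_ ?_ ⟨hre, him⟩
  · exact (ZMod.differentiableAt_LFunction Φ s (.inl (hne hs.2))).differentiableWithinAt
  · refine DifferentiableAt.differentiableWithinAt (.add (.add (.fun_sum fun n hn ↦ ?_) ?_) ?_)
    · have hn : n ≠ 0 := Nat.one_le_iff_ne_zero.1 (Finset.mem_Icc.1 hn).1
      exact (differentiableAt_id.neg.const_cpow (.inl (Nat.cast_ne_zero.2 hn))).const_mul _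
    · exact (((differentiableAt_id.const_sub 1).const_cpow (.inl (Nat.cast_ne_zero.2 hm))).const_mul
        _).div (differentiableAt_id.sub_const 1) (sub_ne_zero.2 (hne hs.2))
    · exact differentiableAt_id.mul (differentiableAt_integral_cpow_mul
        (Nat.cast_pos.2 (Nat.pos_of_ne_zero hm)) (measurable_sumRemainder _ _ m) hB hs.1)
  · simp
  · filter_upwards [(Complex.isOpen_re_gt 1).mem_nhds (show 1 < (2 + I).re by simp)] with s hs
    rw [ZMod.LFunction_eq_LSeries Φ hs,
      LSeries_eq_sum_add_integral (fun n ↦ hΦ n) hm (periodMean Φ) hB hs]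

lemma continuousOn_LFunction_vertical (Φ : ZMod M → ℂ) (σ : ℝ) :
    ContinuousOn (fun t : ℝ ↦ ZMod.LFunction Φ (σ + t * I)) (Ioi 0) := by
  intro t ht
  have hne : (σ + t * I : ℂ) ≠ 1 := fun h ↦ by
    simpa [(mem_Ioi.1 ht).ne'] using congrArg Complex.im h
  exact ((ZMod.differentiableAt_LFunction Φ _ (.inl hne)).continuousAt.comp
    (f := fun t : ℝ ↦ (σ + t * I : ℂ)) (by fun_prop)).continuousWithinAt

end ApproximateFormula

lemma integral_Ioi_cpow_mul_eq {m : ℝ} (hm : 0 < m) (A : ℝ → ℂ) (σ t : ℝ) :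
    ∫ u in Ioi m, (u : ℂ) ^ (-(σ + t * I) - 1) * A u =
      ∫ v in Ioi (log m), exp (-σ * v) * A (exp v) * Complex.exp (-(t * v) * I) := by
  conv_lhs => rw [← exp_log hm]
  rw [← integral_comp_exp_Ioi]
  refine setIntegral_congr_fun measurableSet_Ioi fun v _ ↦ ?_
  simp only [Complex.real_smul]
  rw [Complex.cpow_def_of_ne_zero (Complex.ofReal_ne_zero.2 (exp_ne_zero v)), ← Complex.ofReal_log
    (exp_pos v).le, log_exp, ← mul_assoc, Complex.ofReal_exp, ← Complex.exp_add, mul_right_comm,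
    Complex.ofReal_exp, ← Complex.exp_add]
  congr 2
  push_cast
  ring

lemma integral_norm_sq_integral_Ioi_cpow_mul_le {m : ℝ} (hm : 0 < m) {A : ℝ → ℂ}
    (hA : Measurable A) {B : ℝ} (hAB : ∀ u ∈ Ioi m, ‖A u‖ ≤ B) {σ T : ℝ} (hσ : 0 < σ)
    (hT : 0 < T) :
    ∫ t in T..2 * T, ‖∫ u in Ioi m, (u : ℂ) ^ (-(σ + t * I) - 1) * A u‖ ^ 2 ≤
      exp 4 * (2 * π) * (B ^ 2 * m ^ (-(2 * σ)) / (2 * σ)) := by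
  have hbound : ∀ v ∈ Ioi (log m), ‖exp (-σ * v) * A (exp v)‖ ≤ B * exp (-σ * v) := fun v hv ↦ by
    rw [norm_mul, Complex.norm_real, Real.norm_of_nonneg (exp_pos _).le, mul_comm]
    exact mul_le_mul_of_nonneg_right (hAB _ ((log_lt_iff_lt_exp hm).1 hv)) (exp_pos _).le
  have hbound2 : ∀ v ∈ Ioi (log m),
      ‖exp (-σ * v) * A (exp v)‖ ^ 2 ≤ B ^ 2 * exp (-(2 * σ) * v) := fun v hv ↦ by
    refine (pow_le_pow_left₀ (norm_nonneg _) (hbound v hv) 2).trans_eq ?_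
    rw [mul_pow, ← exp_nat_mul]
    push_cast
    ring_nf
  have hmeas : Measurable fun v ↦ exp (-σ * v) * A (exp v) := by fun_prop
  have hint : IntegrableOn (fun v ↦ exp (-σ * v) * A (exp v)) (Ioi (log m)) :=
    ((integrableOn_exp_mul_Ioi (neg_lt_zero.2 hσ) _).const_mul B).mono' hmeas.aestronglyMeasurable
      ((ae_restrict_iff' measurableSet_Ioi).2 (.of_forall hbound))
  have hdom : IntegrableOn (fun v ↦ B ^ 2 * exp (-(2 * σ) * v)) (Ioi (log m)) :=
    (integrableOn_exp_mul_Ioi (by linarith) _).const_mul _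
  have hint2 : IntegrableOn (fun v ↦ ‖exp (-σ * v) * A (exp v)‖ ^ 2) (Ioi (log m)) :=
    hdom.mono' (hmeas.norm.pow_const 2).aestronglyMeasurable
      ((ae_restrict_iff' measurableSet_Ioi).2 (.of_forall fun v hv ↦ by
        rw [Real.norm_of_nonneg (sq_nonneg _)]; exact hbound2 v hv))
  simp only [integral_Ioi_cpow_mul_eq hm]
  refine (integral_norm_sq_integral_Ioi_mul_exp_le hT hint hint2).trans ?_
  gcongr
  calc ∫ v in Ioi (log m), ‖exp (-σ * v) * A (exp v)‖ ^ 2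
      ≤ ∫ v in Ioi (log m), B ^ 2 * exp (-(2 * σ) * v) :=
        setIntegral_mono_on hint2 hdom measurableSet_Ioi hbound2
    _ = B ^ 2 * m ^ (-(2 * σ)) / (2 * σ) := by
        rw [integral_const_mul, integral_exp_mul_Ioi (by linarith), rpow_def_of_pos hm,
          neg_div_neg_eq, mul_comm (log m), mul_div_assoc]

/-- The coefficient `Φ n * n ^ (-σ)` of `n ^ (-it)` in the Dirichlet series of `Φ` at `σ + it`. -/
noncomputable def dirichletCoeff {M : ℕ} (Φ : ZMod M → ℂ) (σ : ℝ) (n : ℕ) : ℂ :=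
  Φ n * (n : ℂ) ^ (-σ : ℂ)

/-- Bound for the mean square over `[T, 2T]` of the error in approximating `L(Φ, σ + it)`, where `Φ`
has period `M`, by the first `m` terms of its Dirichlet series. -/
noncomputable def approximationError (M m : ℕ) (σ T : ℝ) : ℝ :=
  2 * (m : ℝ) ^ (2 - 2 * σ) / T +
    18 * T ^ 2 * (exp 4 * (2 * π) * ((3 * M) ^ 2 * (m : ℝ) ^ (-(2 * σ)) / (2 * σ)))

lemma approximationError_nonneg (M m : ℕ) {σ T : ℝ} (hσ : 0 ≤ σ) (hT : 0 ≤ T) :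
    0 ≤ approximationError M m σ T := by
  unfold approximationError
  positivity

lemma norm_dirichletCoeff {M : ℕ} (Φ : ZMod M → ℂ) (σ : ℝ) {n : ℕ} (hn : n ≠ 0) :
    ‖dirichletCoeff Φ σ n‖ = ‖Φ n‖ * (n : ℝ) ^ (-σ) := by
  rw [dirichletCoeff, norm_mul, Complex.norm_natCast_cpow_of_pos (Nat.pos_of_ne_zero hn),
    Complex.neg_re, Complex.ofReal_re]

section ApproximateFormulaMeanSquare

variable {M m : ℕ} [NeZero M] {Φ : ZMod M → ℂ} {σ T : ℝ}

lemma norm_sq_LFunction_sub_sum_le (hΦ : ∀ a, ‖Φ a‖ ≤ 1) (hm : m ≠ 0) (hσ0 : 0 < σ) (hσ1 : σ ≤ 1)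
    (hT : 1 ≤ T) {t : ℝ} (ht : t ∈ Icc T (2 * T)) :
    ‖ZMod.LFunction Φ (σ + t * I) -
        ∑ n ∈ Finset.Icc 1 m, dirichletCoeff Φ σ n * twist t n‖ ^ 2 ≤
      2 * (m : ℝ) ^ (2 - 2 * σ) / T ^ 2 + 18 * T ^ 2 * ‖∫ u in Ioi (m : ℝ),
        (u : ℂ) ^ (-(σ + t * I) - 1) * sumRemainder (fun n ↦ Φ n) (periodMean Φ) m u‖ ^ 2 := by
  have hT0 : 0 < T := zero_lt_one.trans_le hT
  set s : ℂ := σ + t * I with hs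
  have hre : s.re = σ := by simp [hs]
  have him : s.im = t := by simp [hs]
  set J := ∫ u in Ioi (m : ℝ), (u : ℂ) ^ (-s - 1) * sumRemainder (fun n ↦ Φ n) (periodMean Φ) m u
  have hsum : ∑ n ∈ Finset.Icc 1 m, Φ n * (n : ℂ) ^ (-s) =
      ∑ n ∈ Finset.Icc 1 m, dirichletCoeff Φ σ n * twist t n :=
    Finset.sum_congr rfl fun n hn ↦ by
      rw [cpow_neg_add_mul_I σ t (Nat.one_le_iff_ne_zero.1 (Finset.mem_Icc.1 hn).1),
        dirichletCoeff, mul_assoc]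
  have hpole : ‖periodMean Φ * (m : ℂ) ^ (1 - s) / (s - 1)‖ ≤ (m : ℝ) ^ (1 - σ) / T := by
    rw [norm_div, norm_mul, Complex.norm_natCast_cpow_of_pos (Nat.pos_of_ne_zero hm),
      Complex.sub_re, Complex.one_re, hre]
    gcongr
    · exact mul_le_of_le_one_left (by positivity) (norm_periodMean_le hΦ)
    · refine (le_trans ?_ (le_abs_self _)).trans (Complex.abs_im_le_norm (s - 1))
      simpa [him] using ht.1
  have hrem : ‖s * J‖ ≤ 3 * T * ‖J‖ := by
    rw [norm_mul]
    gcongr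
    refine (Complex.norm_le_abs_re_add_abs_im s).trans ?_
    rw [hre, him, abs_of_pos hσ0, abs_of_pos (hT0.trans_le ht.1)]
    linarith [ht.2]
  rw [LFunction_eq_sum_add_integral hΦ hm (hσ0.trans_eq hre.symm)
    ((hT0.trans_le ht.1).trans_eq him.symm), hsum, add_assoc, add_sub_cancel_left]
  calc ‖periodMean Φ * (m : ℂ) ^ (1 - s) / (s - 1) + s * J‖ ^ 2
      ≤ ((m : ℝ) ^ (1 - σ) / T + 3 * T * ‖J‖) ^ 2 := by
        gcongr
        exact (norm_add_le _ _).trans (add_le_add hpole hrem)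
    _ ≤ 2 * (((m : ℝ) ^ (1 - σ) / T) ^ 2 + (3 * T * ‖J‖) ^ 2) := add_sq_le
    _ = 2 * (m : ℝ) ^ (2 - 2 * σ) / T ^ 2 + 18 * T ^ 2 * ‖J‖ ^ 2 := by
        rw [div_pow, ← rpow_mul_natCast (Nat.cast_nonneg m)]
        push_cast
        ring_nf

lemma integral_norm_sq_LFunction_sub_sum_le (hΦ : ∀ a, ‖Φ a‖ ≤ 1) (hm : m ≠ 0) (hσ0 : 0 < σ)
    (hσ1 : σ ≤ 1) (hT : 1 ≤ T) :
    ∫ t in T..2 * T, ‖ZMod.LFunction Φ (σ + t * I) -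
        ∑ n ∈ Finset.Icc 1 m, dirichletCoeff Φ σ n * twist t n‖ ^ 2 ≤
      approximationError M m σ T := by
  have hT0 : 0 < T := zero_lt_one.trans_le hT
  have hle : T ≤ 2 * T := by linarith
  have hm0 : (0 : ℝ) < m := Nat.cast_pos.2 (Nat.pos_of_ne_zero hm)
  have hmeas := measurable_sumRemainder (fun n ↦ Φ n) (periodMean Φ) m
  have hB : ∀ u ∈ Ioi (m : ℝ), ‖sumRemainder (fun n ↦ Φ n) (periodMean Φ) m u‖ ≤ 3 * M :=
    fun u hu ↦ norm_sumRemainder_le hΦ (le_of_lt hu)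
  have hcontL : ContinuousOn (fun t : ℝ ↦ ‖ZMod.LFunction Φ (σ + t * I) -
      ∑ n ∈ Finset.Icc 1 m, dirichletCoeff Φ σ n * twist t n‖ ^ 2) (uIcc T (2 * T)) := by
    refine (((continuousOn_LFunction_vertical Φ σ).mono fun t ht ↦ ?_).sub
      (Continuous.continuousOn (continuous_finsetSum _ fun n hn ↦ ?_))).norm.pow 2
    · rw [uIcc_of_le hle] at ht
      exact hT0.trans_le ht.1
    · exact continuous_const.mul
        (continuous_twist (Nat.one_le_iff_ne_zero.1 (Finset.mem_Icc.1 hn).1))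
  have hintJ := (((continuous_integral_Ioi_cpow_mul hm0 hmeas hB hσ0).norm.fun_pow
    2).intervalIntegrable (μ := volume) T (2 * T)).const_mul (18 * T ^ 2)
  refine (intervalIntegral.integral_mono_on hle hcontL.intervalIntegrable
    (intervalIntegrable_const.add hintJ) fun t ht ↦
    norm_sq_LFunction_sub_sum_le hΦ hm hσ0 hσ1 hT ht).trans ?_
  rw [intervalIntegral.integral_add intervalIntegrable_const hintJ,
    intervalIntegral.integral_const, intervalIntegral.integral_const_mul, smul_eq_mul,
    approximationError]
  refine add_le_add (le_of_eq ?_) (mul_le_mul_of_nonneg_left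
    (integral_norm_sq_integral_Ioi_cpow_mul_le hm0 hmeas hB hσ0 hT0) (by positivity))
  field_simp
  ring

end ApproximateFormulaMeanSquare

lemma eulerPolynomial_eq_indicator (hPQ : P ⊆ Q) (r : ℕ → ℂ) (t : ℝ) :
    eulerPolynomial P r t = eulerPolynomial Q ((P : Set ℕ).indicator r) t := by
  refine Finset.prod_subset_one_on_sdiff hPQ (fun p hp ↦ ?_) fun p hp ↦ ?_
  · rw [indicator_of_notMem (Finset.mem_sdiff.1 hp).2, zero_mul, add_zero]
  · rw [indicator_of_mem hp]

lemma integral_norm_sq_sum_mul_eulerPolynomial_le (hQ : ∀ p ∈ Q, p.Prime) (hS0 : ∀ n ∈ S, n ≠ 0)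
    (hSQ : ∀ n ∈ S, ∀ p ∈ Q, ¬p ∣ n) {T : ℝ} (hT : 0 < T)
    (hle : ∀ n ∈ S, (n * ∏ p ∈ Q, p : ℕ) ≤ T) (b r : ℕ → ℂ) :
    ∫ t in T..2 * T, ‖(∑ n ∈ S, b n * twist t n) * eulerPolynomial Q r t‖ ^ 2 ≤
      meanValueConst * T * ((∑ n ∈ S, ‖b n‖ ^ 2) * ∏ p ∈ Q, (1 + ‖r p‖ ^ 2)) := by
  simpa [Fin.sum_univ_two, eulerPolynomial] using
    integral_norm_sq_sum_mul_prod_sum_le (d := 1) hQ hS0 hSQ hT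
      (fun n hn ↦ by simpa only [pow_one] using hle n hn) b fun p ↦ ![1, r p]

lemma integral_norm_sq_eulerPolynomial_mul_eulerPolynomial_le (hQ : ∀ p ∈ Q, p.Prime) {T : ℝ}
    (hT : 0 < T) (hQT : ((∏ p ∈ Q, p : ℕ) : ℝ) ^ 2 ≤ T) (a r : ℕ → ℂ) :
    ∫ t in T..2 * T, ‖eulerPolynomial Q a t * eulerPolynomial Q r t‖ ^ 2 ≤
      meanValueConst * T * ∏ p ∈ Q, (1 + ‖a p + r p‖ ^ 2 + ‖a p * r p‖ ^ 2) := by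
  have hprod (t : ℝ) : eulerPolynomial Q a t * eulerPolynomial Q r t =
      (∑ n ∈ {1}, 1 * twist t n) *
        ∏ p ∈ Q, ∑ e, ![1, a p + r p, a p * r p] e * twist t p ^ (e : ℕ) := by
    rw [Finset.sum_singleton, map_one, mul_one, one_mul, eulerPolynomial, eulerPolynomial,
      ← Finset.prod_mul_distrib]
    refine Finset.prod_congr rfl fun p _ ↦ ?_
    simp [Fin.sum_univ_three]
    ring
  simp only [hprod]
  simpa [Fin.sum_univ_three] using integral_norm_sq_sum_mul_prod_sum_le (S := {1}) (d := 2) hQ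
    (by simp) (fun n hn p hp ↦ by simpa [Finset.mem_singleton.1 hn] using (hQ p hp).ne_one) hT
    (by simpa using hQT) (fun _ ↦ 1) fun p ↦ ![1, a p + r p, a p * r p]

lemma one_add_norm_sub_sq_add_norm_mul_sq_le (a : ℂ) {r : ℂ} (hr : ‖r‖ = 1) :
    1 + ‖r - a‖ ^ 2 + ‖a * r‖ ^ 2 ≤ 2 * exp (‖a‖ ^ 2 - (a * starRingEnd ℂ r).re) := by
  have hsq : ‖r - a‖ ^ 2 = 1 + ‖a‖ ^ 2 - 2 * (a * starRingEnd ℂ r).re := by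
    rw [norm_sub_rev, Complex.sq_norm, Complex.normSq_sub, ← Complex.sq_norm, ← Complex.sq_norm, hr]
    ring
  rw [hsq, norm_mul, hr, mul_one]
  linarith [add_one_le_exp (‖a‖ ^ 2 - (a * starRingEnd ℂ r).re)]

/-- The cross terms `Re (a p * conj (r p))` make the mollified resonator smaller than the
resonator. -/
lemma integral_norm_sq_eulerPolynomial_neg_mul_le (hQ : ∀ p ∈ Q, p.Prime) (hPQ : P ⊆ Q)
    (hr : ∀ p ∈ P, ‖r p‖ = 1) {T : ℝ} (hT : 0 < T) (hQT : ((∏ p ∈ Q, p : ℕ) : ℝ) ^ 2 ≤ T)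
    (a : ℕ → ℂ) :
    ∫ t in T..2 * T, ‖eulerPolynomial Q (fun p ↦ -a p) t * eulerPolynomial P r t‖ ^ 2 ≤
      meanValueConst * T * (2 ^ P.card *
        exp (∑ p ∈ Q, ‖a p‖ ^ 2 - ∑ p ∈ P, (a p * starRingEnd ℂ (r p)).re)) := by
  simp only [eulerPolynomial_eq_indicator hPQ r]
  refine (integral_norm_sq_eulerPolynomial_mul_eulerPolynomial_le hQ hT hQT _ _).trans ?_
  have hfactor : ∀ p ∈ Q, 1 + ‖-a p + (P : Set ℕ).indicator r p‖ ^ 2 +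
      ‖-a p * (P : Set ℕ).indicator r p‖ ^ 2 ≤
      (if p ∈ P then 2 * exp (-(a p * starRingEnd ℂ (r p)).re) else 1) * exp (‖a p‖ ^ 2) := by
    intro p _
    split_ifs with hp
    · rw [indicator_of_mem (Finset.mem_coe.2 hp), neg_add_eq_sub, neg_mul, norm_neg, mul_assoc,
        ← exp_add, neg_add_eq_sub]
      exact one_add_norm_sub_sq_add_norm_mul_sq_le _ (hr p hp)
    · rw [indicator_of_notMem (Finset.mem_coe.not.2 hp), add_zero, mul_zero, norm_neg, norm_zero]
      linarith [add_one_le_exp (‖a p‖ ^ 2)]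
  have hC := meanValueConst_pos
  gcongr
  refine (Finset.prod_le_prod (fun _ _ ↦ by positivity) hfactor).trans_eq ?_
  rw [Finset.prod_mul_distrib, Finset.prod_ite_mem, Finset.inter_eq_right.2 hPQ,
    Finset.prod_mul_distrib, Finset.prod_const, ← exp_sum, ← exp_sum, mul_assoc, ← exp_add,
    Finset.sum_neg_distrib, neg_add_eq_sub]

instance neZero_primorial (z : ℕ) : NeZero (primorial z) := ⟨primorial_ne_zero z⟩

lemma prod_le_four_pow {z : ℕ} (hP : P ⊆ Nat.primesLE z) : ∏ p ∈ P, p ≤ 4 ^ z := by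
  refine le_trans ?_ (primorial_le_four_pow z)
  rw [primorial_eq_prod_primesLE]
  exact Finset.prod_le_prod_of_subset_of_one_le' hP fun p hp _ ↦ (Nat.mem_primesLE.1 hp).2.one_le

lemma card_le_of_subset_primesLE {z : ℕ} (hP : P ⊆ Nat.primesLE z) : P.card ≤ z := by
  refine (Finset.card_le_card (t := Finset.Icc 1 z) fun p hp ↦ ?_).trans_eq (by simp)
  obtain ⟨hpz, hp⟩ := Nat.mem_primesLE.1 (hP hp)
  exact Finset.mem_Icc.2 ⟨hp.one_le, hpz⟩

lemma four_pow_card_le {z : ℕ} (hP : P ⊆ Nat.primesLE z) :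
    (4 : ℝ) ^ P.card ≤ 2 ^ P.card * 2 ^ z := by
  rw [show (4 : ℝ) = 2 * 2 by norm_num, mul_pow]
  gcongr
  · exact one_le_two
  · exact card_le_of_subset_primesLE hP

section RemoveEulerFactors

variable {N : ℕ} {σ T : ℝ}

/-- The character inducing the `L`-function of `χ` without its Euler factors at the primes
`p ≤ z`. -/
noncomputable def removeEulerFactors (χ : DirichletCharacter ℂ N) (z : ℕ) :
    DirichletCharacter ℂ (N * primorial z) :=
  DirichletCharacter.changeLevel (Nat.dvd_mul_right N (primorial z)) χ

lemma removeEulerFactors_apply_eq_zero (χ : DirichletCharacter ℂ N) {z n p : ℕ}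
    (hp : p ∈ Nat.primesLE z) (hpn : p ∣ n) : removeEulerFactors χ z n = 0 := by
  obtain ⟨hpz, hp⟩ := Nat.mem_primesLE.1 hp
  refine MulChar.map_nonunit _ fun hunit ↦ hp.one_lt.ne' ?_
  exact Nat.eq_one_of_dvd_coprimes ((ZMod.isUnit_iff_coprime _ _).1 hunit) hpn
    ((hp.dvd_primorial_iff.2 hpz).mul_left N)

/-- The truncated Euler product of `L(χ, σ + it)⁻¹` over the primes `p ≤ z`. -/
noncomputable def mollifier (χ : DirichletCharacter ℂ N) (σ : ℝ) (z : ℕ) (t : ℝ) : ℂ :=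
  eulerPolynomial (Nat.primesLE z) (fun p ↦ -dirichletCoeff χ σ p) t

lemma continuous_mollifier (χ : DirichletCharacter ℂ N) (σ : ℝ) (z : ℕ) :
    Continuous (mollifier χ σ z) :=
  continuous_eulerPolynomial (fun _ hp ↦ (Nat.mem_primesLE.1 hp).2) _

lemma LFunction_removeEulerFactors [NeZero N] (χ : DirichletCharacter ℂ N) {z : ℕ} (hz : N ≤ z)
    (σ : ℝ) {t : ℝ} (ht : t ≠ 0) :
    (removeEulerFactors χ z).LFunction (σ + t * I) =
      χ.LFunction (σ + t * I) * mollifier χ σ z t := by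
  have hs : (σ + t * I : ℂ) ≠ 1 := fun h ↦ ht (by simpa using congrArg Complex.im h)
  have hfactors : (N * primorial z).primeFactors = Nat.primesLE z := by
    rw [Nat.primeFactors_mul (NeZero.ne N) (primorial_ne_zero z), primeFactors_primorial]
    refine Finset.union_eq_right.2 fun p hp ↦ Nat.mem_primesLE.2
      ⟨(Nat.le_of_dvd (NeZero.pos N) (Nat.dvd_of_mem_primeFactors hp)).trans hz,
        Nat.prime_of_mem_primeFactors hp⟩
  rw [removeEulerFactors, DirichletCharacter.LFunction_changeLevel _ _ (.inr hs), hfactors,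
    mollifier, eulerPolynomial]
  congr 1
  refine Finset.prod_congr rfl fun p hp ↦ ?_
  rw [cpow_neg_add_mul_I σ t (Nat.mem_primesLE.1 hp).2.ne_zero, dirichletCoeff]
  ring

/-- The integers in `(z, m]` all of whose prime factors exceed `z`. -/
def roughNumbers (z m : ℕ) : Finset ℕ :=
  {n ∈ Finset.Ioc z m | ∀ p ∈ Nat.primesLE z, ¬p ∣ n}

lemma sum_Icc_removeEulerFactors (χ : DirichletCharacter ℂ N) {z m : ℕ} (hz : z ≠ 0) (hm : m ≠ 0)
    (σ t : ℝ) :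
    ∑ n ∈ Finset.Icc 1 m, dirichletCoeff (removeEulerFactors χ z) σ n * twist t n =
      1 + ∑ n ∈ roughNumbers z m, dirichletCoeff (removeEulerFactors χ z) σ n * twist t n := by
  have hone : (1 : ℂ) = ∑ n ∈ {1}, dirichletCoeff (removeEulerFactors χ z) σ n * twist t n := by
    simp [dirichletCoeff]
  have hdisj : Disjoint {1} (roughNumbers z m) := by
    simp only [roughNumbers, Finset.disjoint_singleton_left, Finset.mem_filter, Finset.mem_Ioc]
    lia
  rw [hone, ← Finset.sum_union hdisj]
  refine (Finset.sum_subset (fun n hn ↦ ?_) fun n hn hn' ↦ ?_).symm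
  · simp only [roughNumbers, Finset.mem_union, Finset.mem_singleton, Finset.mem_filter,
      Finset.mem_Ioc] at hn
    simp only [Finset.mem_Icc]
    lia
  · rw [Finset.mem_Icc] at hn
    simp only [roughNumbers, Finset.mem_union, Finset.mem_singleton, Finset.mem_filter,
      Finset.mem_Ioc, not_or] at hn'
    suffices ∃ p ∈ Nat.primesLE z, p ∣ n by
      obtain ⟨p, hp, hpn⟩ := this
      rw [dirichletCoeff, removeEulerFactors_apply_eq_zero χ hp hpn, zero_mul, zero_mul]
    by_cases hzn : z < n
    · by_contra! hrough
      exact hn'.2 ⟨⟨hzn, hn.2⟩, hrough⟩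
    · exact ⟨n.minFac, Nat.mem_primesLE.2 ⟨(Nat.minFac_le hn.1).trans (not_lt.1 hzn),
        Nat.minFac_prime hn'.1⟩, n.minFac_dvd⟩

lemma integral_norm_sq_sum_roughNumbers_mul_eulerPolynomial_le {M z m : ℕ}
    {Φ : ZMod M → ℂ} (hΦ : ∀ a, ‖Φ a‖ ≤ 1) (hP : P ⊆ Nat.primesLE z) (hr : ∀ p ∈ P, ‖r p‖ = 1)
    (hT : 0 < T) (hm : (m * 4 ^ z : ℝ) ≤ T) (σ : ℝ) :
    ∫ t in T..2 * T, ‖(∑ n ∈ roughNumbers z m, dirichletCoeff Φ σ n * twist t n) *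
        eulerPolynomial P r t‖ ^ 2 ≤
      meanValueConst * T * ((∑ n ∈ Finset.Ioc z m, (n : ℝ) ^ (-(2 * σ))) * 2 ^ P.card) := by
  have hmem {n : ℕ} (hn : n ∈ roughNumbers z m) :
      (z < n ∧ n ≤ m) ∧ ∀ p ∈ Nat.primesLE z, ¬p ∣ n := by
    simpa only [roughNumbers, Finset.mem_filter, Finset.mem_Ioc] using hn
  have hcoeff : ∑ n ∈ roughNumbers z m, ‖dirichletCoeff Φ σ n‖ ^ 2 ≤
      ∑ n ∈ Finset.Ioc z m, (n : ℝ) ^ (-(2 * σ)) := by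
    refine (Finset.sum_le_sum fun n hn ↦ ?_).trans
      (Finset.sum_le_sum_of_subset_of_nonneg (Finset.filter_subset _ _) fun _ _ _ ↦ by positivity)
    rw [norm_dirichletCoeff Φ σ (Nat.ne_zero_of_lt (hmem hn).1.1), mul_pow,
      ← rpow_mul_natCast (Nat.cast_nonneg n), Nat.cast_ofNat, neg_mul, mul_comm σ]
    exact mul_le_of_le_one_left (by positivity) (pow_le_one₀ (norm_nonneg _) (hΦ n))
  have hprod : ∏ p ∈ P, (1 + ‖r p‖ ^ 2) = 2 ^ P.card := by
    rw [Finset.prod_congr rfl fun p hp ↦ by rw [hr p hp], Finset.prod_const]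
    norm_num
  have hC := meanValueConst_pos
  refine (integral_norm_sq_sum_mul_eulerPolynomial_le (fun p hp ↦ (Nat.mem_primesLE.1 (hP hp)).2)
    (fun n hn ↦ Nat.ne_zero_of_lt (hmem hn).1.1) (fun n hn p hp ↦ (hmem hn).2 p (hP hp)) hT
    (fun n hn ↦ le_trans ?_ hm) _ r).trans ?_
  · exact_mod_cast Nat.mul_le_mul (hmem hn).1.2 (prod_le_four_pow hP)
  · rw [hprod]
    gcongr

lemma continuousOn_LFunction_mul_mollifier [NeZero N] (χ : DirichletCharacter ℂ N) (σ : ℝ)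
    (z : ℕ) :
    ContinuousOn (fun t : ℝ ↦ χ.LFunction (σ + t * I) * mollifier χ σ z t) (Ioi 0) :=
  (continuousOn_LFunction_vertical χ σ).mul (continuous_mollifier χ σ z).continuousOn

lemma norm_sq_LFunction_mul_mollifier_sub_one_mul_le [NeZero N] (χ : DirichletCharacter ℂ N)
    {z m : ℕ} (hz : N ≤ z) (hP : P ⊆ Nat.primesLE z) (hr : ∀ p ∈ P, ‖r p‖ = 1) (hm : m ≠ 0)
    (σ : ℝ) {t : ℝ} (ht : t ≠ 0) :
    ‖(χ.LFunction (σ + t * I) * mollifier χ σ z t - 1) * eulerPolynomial P r t‖ ^ 2 ≤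
      2 * ‖(∑ n ∈ roughNumbers z m, dirichletCoeff (removeEulerFactors χ z) σ n * twist t n) *
        eulerPolynomial P r t‖ ^ 2 +
      2 * 4 ^ P.card * ‖ZMod.LFunction (removeEulerFactors χ z) (σ + t * I) -
        ∑ n ∈ Finset.Icc 1 m, dirichletCoeff (removeEulerFactors χ z) σ n * twist t n‖ ^ 2 := by
  rw [← LFunction_removeEulerFactors χ hz σ ht,
    sum_Icc_removeEulerFactors χ ((NeZero.pos N).trans_le hz).ne' hm, DirichletCharacter.LFunction]
  set L := ZMod.LFunction (removeEulerFactors χ z) (σ + t * I)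
  set D := ∑ n ∈ roughNumbers z m, dirichletCoeff (removeEulerFactors χ z) σ n * twist t n
  set R := eulerPolynomial P r t
  have hR : ‖R‖ ^ 2 ≤ 4 ^ P.card := by
    refine (pow_le_pow_left₀ (norm_nonneg _) (norm_eulerPolynomial_le
      (fun p hp ↦ (Nat.mem_primesLE.1 (hP hp)).2) hr t) 2).trans_eq ?_
    rw [← pow_mul, mul_comm, pow_mul]
    norm_num
  calc ‖(L - 1) * R‖ ^ 2 = ‖D * R + (L - (1 + D)) * R‖ ^ 2 := by ring_nf
    _ ≤ (‖D * R‖ + ‖(L - (1 + D)) * R‖) ^ 2 := by gcongr; exact norm_add_le _ _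
    _ ≤ 2 * (‖D * R‖ ^ 2 + ‖(L - (1 + D)) * R‖ ^ 2) := add_sq_le
    _ = 2 * ‖D * R‖ ^ 2 + 2 * ‖R‖ ^ 2 * ‖L - (1 + D)‖ ^ 2 := by rw [norm_mul (L - _)]; ring
    _ ≤ 2 * ‖D * R‖ ^ 2 + 2 * 4 ^ P.card * ‖L - (1 + D)‖ ^ 2 := by gcongr

lemma integral_norm_sq_LFunction_mul_mollifier_sub_one_mul_le [NeZero N]
    (χ : DirichletCharacter ℂ N) {z m : ℕ} (hz : N ≤ z) (hP : P ⊆ Nat.primesLE z)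
    (hr : ∀ p ∈ P, ‖r p‖ = 1) (hm0 : m ≠ 0) (hσ0 : 0 < σ) (hσ1 : σ ≤ 1) (hT : 1 ≤ T)
    (hm : (m * 4 ^ z : ℝ) ≤ T) :
    ∫ t in T..2 * T,
        ‖(χ.LFunction (σ + t * I) * mollifier χ σ z t - 1) * eulerPolynomial P r t‖ ^ 2 ≤
      2 * (meanValueConst * T * ((∑ n ∈ Finset.Ioc z m, (n : ℝ) ^ (-(2 * σ))) * 2 ^ P.card)) +
      2 * 4 ^ P.card * approximationError (N * primorial z) m σ T := by
  have hT0 : 0 < T := zero_lt_one.trans_le hT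
  have hle : T ≤ 2 * T := by linarith
  have hpos : uIcc T (2 * T) ⊆ Ioi 0 := fun t ht ↦
    hT0.trans_le (by rw [uIcc_of_le hle] at ht; exact ht.1)
  have hR : Continuous (eulerPolynomial P r) :=
    continuous_eulerPolynomial (fun p hp ↦ (Nat.mem_primesLE.1 (hP hp)).2) r
  have hL : ContinuousOn _ (uIcc T (2 * T)) :=
    (continuousOn_LFunction_mul_mollifier χ σ z).mono hpos
  have hD : Continuous fun t ↦
      ∑ n ∈ roughNumbers z m, dirichletCoeff (removeEulerFactors χ z) σ n * twist t n :=
    continuous_finsetSum _ fun n hn ↦ continuous_const.mul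
      (continuous_twist (Nat.ne_zero_of_lt (Finset.mem_Ioc.1 (Finset.mem_filter.1 hn).1).1))
  have hS : Continuous fun t ↦
      ∑ n ∈ Finset.Icc 1 m, dirichletCoeff (removeEulerFactors χ z) σ n * twist t n :=
    continuous_finsetSum _ fun n hn ↦ continuous_const.mul
      (continuous_twist (Nat.one_le_iff_ne_zero.1 (Finset.mem_Icc.1 hn).1))
  have hDint := (((hD.mul hR).norm.pow 2).intervalIntegrable (μ := volume) T (2 * T)).const_mul 2
  have hEint := ((((continuousOn_LFunction_vertical (removeEulerFactors χ z) σ).mono hpos).sub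
    hS.continuousOn).norm.pow 2).intervalIntegrable (μ := volume) |>.const_mul (2 * 4 ^ P.card)
  refine (intervalIntegral.integral_mono_on hle
    (((hL.sub continuousOn_const).mul hR.continuousOn).norm.pow 2).intervalIntegrable
    (hDint.add hEint) fun t ht ↦ norm_sq_LFunction_mul_mollifier_sub_one_mul_le χ hz hP hr hm0 σ
      (hT0.trans_le ht.1).ne').trans ?_
  rw [intervalIntegral.integral_add hDint hEint, intervalIntegral.integral_const_mul,
    intervalIntegral.integral_const_mul]
  have hψ := (removeEulerFactors χ z).norm_le_one
  exact add_le_add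
    (mul_le_mul_of_nonneg_left (integral_norm_sq_sum_roughNumbers_mul_eulerPolynomial_le hψ hP hr
      hT0 hm σ) (by norm_num))
    (mul_le_mul_of_nonneg_left (integral_norm_sq_LFunction_sub_sum_le hψ hm0 hσ0 hσ1 hT)
      (by positivity))

end RemoveEulerFactors

section MollifiedLFunction

variable {σ T : ℝ}

/-- The resonator and the mollifier live on the primes up to `primeCutoff σ T`. The factor
`(σ - 1 / 2) / 8` makes powers such as `32 ^ primeCutoff σ T` negligible against
`T ^ (σ - 1 / 2)`. -/
noncomputable def primeCutoff (σ T : ℝ) : ℕ := ⌊(σ - 1 / 2) / 8 * log T⌋₊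

lemma tendsto_primeCutoff (hσ : 1 / 2 < σ) : Tendsto (primeCutoff σ) atTop atTop :=
  tendsto_nat_floor_atTop.comp
    (tendsto_log_atTop.const_mul_atTop (div_pos (sub_pos.2 hσ) (by norm_num)))

lemma pow_primeCutoff_le (hσ : 1 / 2 < σ) (hT : 1 ≤ T) :
    (32 : ℝ) ^ primeCutoff σ T ≤ T ^ ((σ - 1 / 2) / 2) := by
  have hlog : log 32 ≤ 4 := by
    rw [show (32 : ℝ) = 2 ^ 5 by norm_num, log_pow, Nat.cast_ofNat]
    linarith [log_two_lt_d9]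
  have hfloor : (primeCutoff σ T : ℝ) ≤ (σ - 1 / 2) / 8 * log T :=
    Nat.floor_le (mul_nonneg (by linarith) (log_nonneg hT))
  rw [← rpow_natCast, rpow_def_of_pos (by norm_num), rpow_def_of_pos (zero_lt_one.trans_le hT)]
  refine exp_le_exp.2 ?_
  calc log 32 * primeCutoff σ T ≤ 4 * ((σ - 1 / 2) / 8 * log T) := by gcongr
    _ = log T * ((σ - 1 / 2) / 2) := by ring

lemma natFloor_div_ne_zero {a b : ℝ} (hb : 0 < b) (hba : b ≤ a) : ⌊a / b⌋₊ ≠ 0 := by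
  rwa [← Nat.one_le_iff_ne_zero, Nat.one_le_floor_iff, one_le_div hb]

lemma natFloor_div_mul_le {a b c : ℝ} (ha : 0 ≤ a) (hb : 0 < b) (hcb : c ≤ b) :
    ⌊a / b⌋₊ * c ≤ a := calc
  ⌊a / b⌋₊ * c ≤ ⌊a / b⌋₊ * b := by gcongr
  _ ≤ a := (le_div_iff₀ hb).1 (Nat.floor_le (div_nonneg ha hb.le))

lemma natFloor_rpow_neg_le {a b s : ℝ} (ha : 0 < a) (hb : 1 ≤ b) (hba : b ≤ a) (hs0 : 0 ≤ s)
    (hs2 : s ≤ 2) : (⌊a / b⌋₊ : ℝ) ^ (-s) ≤ 4 * b ^ 2 * a ^ (-s) := by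
  have hb0 : 0 < b := zero_lt_one.trans_le hb
  calc (⌊a / b⌋₊ : ℝ) ^ (-s) ≤ (a / b / 2) ^ (-s) :=
        rpow_le_rpow_of_nonpos (by positivity)
          (Nat.div_two_lt_floor ((one_le_div hb0).2 hba)).le (neg_nonpos.2 hs0)
    _ = (2 * b) ^ s * a ^ (-s) := by
        rw [div_div, mul_comm b, div_rpow ha.le (by positivity),
          rpow_neg (by positivity : 0 ≤ 2 * b), div_inv_eq_mul, mul_comm]
    _ ≤ (2 * b) ^ (2 : ℝ) * a ^ (-s) := by
        gcongr
        linarith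
    _ = 4 * b ^ 2 * a ^ (-s) := by
        rw [rpow_two]
        ring

lemma sq_le_of_pow_four_eq_rpow {Y : ℝ} (hσ : σ ≤ 1) (hT : 1 ≤ T) (hY : 1 ≤ Y)
    (hYT : Y ^ 4 = T ^ (2 * σ - 1)) : Y ^ 2 ≤ T := calc
  Y ^ 2 ≤ Y ^ 4 := pow_le_pow_right₀ hY (by norm_num)
  _ ≤ T ^ (1 : ℝ) := hYT.trans_le (rpow_le_rpow_of_exponent_le hT (by linarith))
  _ = T := rpow_one T

lemma mul_approximationError_le (hσ : σ ∈ Ioo (1 / 2) 1) (hT : 1 ≤ T) {X Y : ℝ} (hX : 1 ≤ X)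
    (hXY : X ^ 5 ≤ Y) (hYT : Y ^ 4 = T ^ (2 * σ - 1)) {M N : ℕ} (hM : M ≤ N * X ^ 2) :
    X * approximationError M ⌊T / Y⌋₊ σ T ≤
      (2 + 648 * (exp 4 * (2 * π)) * N ^ 2) * (T / Y) := by
  obtain ⟨hσ0, hσ1⟩ := hσ
  have hT0 : 0 < T := zero_lt_one.trans_le hT
  have hXY' : X ≤ Y := (le_self_pow₀ hX (by norm_num)).trans hXY
  have hY : 1 ≤ Y := hX.trans hXY'
  have hY2T : Y ^ 2 ≤ T := sq_le_of_pow_four_eq_rpow hσ1.le hT hY hYT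
  have hYle : Y ≤ T := (le_self_pow₀ hY two_ne_zero).trans hY2T
  have hmain : (⌊T / Y⌋₊ : ℝ) ^ (2 - 2 * σ) ≤ T := calc
    (⌊T / Y⌋₊ : ℝ) ^ (2 - 2 * σ) ≤ T ^ (2 - 2 * σ) := by
      gcongr
      · linarith
      · exact (Nat.floor_le (by positivity)).trans (div_le_self hT0.le hY)
    _ ≤ T ^ (1 : ℝ) := rpow_le_rpow_of_exponent_le hT (by linarith)
    _ = T := rpow_one T
  have hsq : T ^ 2 * T ^ (-(2 * σ)) * Y ^ 4 = T := by
    rw [hYT, ← rpow_natCast, ← rpow_add hT0, ← rpow_add hT0]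
    convert rpow_one T using 2
    push_cast
    ring
  have hpole : X * (2 * (⌊T / Y⌋₊ : ℝ) ^ (2 - 2 * σ) / T) ≤ 2 * (T / Y) := calc
    X * (2 * (⌊T / Y⌋₊ : ℝ) ^ (2 - 2 * σ) / T) ≤ Y * (2 * T / T) := by gcongr
    _ = 2 * (Y ^ 2 / Y) := by field_simp
    _ ≤ 2 * (T / Y) := by gcongr
  have hrem : X * (18 * T ^ 2 *
      (exp 4 * (2 * π) * ((3 * M) ^ 2 * (⌊T / Y⌋₊ : ℝ) ^ (-(2 * σ)) / (2 * σ)))) ≤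
      648 * (exp 4 * (2 * π)) * N ^ 2 * (T / Y) := calc
    _ ≤ X * (18 * T ^ 2 * (exp 4 * (2 * π) *
          ((3 * (N * X ^ 2)) ^ 2 * (4 * Y ^ 2 * T ^ (-(2 * σ))) / 1))) := by
        gcongr
        · exact natFloor_rpow_neg_le hT0 hY hYle (by linarith) (by linarith)
        · linarith
    _ = 648 * (exp 4 * (2 * π)) * N ^ 2 * (X ^ 5 * Y ^ 2 * (T ^ 2 * T ^ (-(2 * σ)))) := by ring
    _ ≤ 648 * (exp 4 * (2 * π)) * N ^ 2 * (Y * Y ^ 2 * (T ^ 2 * T ^ (-(2 * σ)))) := by gcongr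
    _ = 648 * (exp 4 * (2 * π)) * N ^ 2 * (T / Y) := by
        rw [← eq_div_iff (by positivity)] at hsq
        rw [hsq]
        field_simp
  rw [approximationError, mul_add, add_mul]
  exact add_le_add hpole hrem

lemma integral_norm_sq_LFunction_mul_mollifier_sub_one_mul_le_add_div {N z : ℕ} [NeZero N]
    (χ : DirichletCharacter ℂ N) {r : ℕ → ℂ} (hσ : σ ∈ Ioo (1 / 2) 1) (hT : 1 ≤ T) (hN : N ≤ z)
    (hP : P ⊆ Nat.primesLE z) (hr : ∀ p ∈ P, ‖r p‖ = 1) {Y ε : ℝ} (hY : (32 : ℝ) ^ z ≤ Y)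
    (hYT : Y ^ 4 = T ^ (2 * σ - 1)) (hε : ∀ m, ∑ n ∈ Finset.Ioc z m, (n : ℝ) ^ (-(2 * σ)) ≤ ε) :
    ∫ t in T..2 * T,
        ‖(χ.LFunction (σ + t * I) * mollifier χ σ z t - 1) * eulerPolynomial P r t‖ ^ 2 ≤
      2 * (meanValueConst * ε + (2 + 648 * (exp 4 * (2 * π)) * N ^ 2) / Y) * (T * 2 ^ P.card) := by
  have hX : (1 : ℝ) ≤ 2 ^ z := one_le_pow₀ one_le_two
  have hXY : ((2 : ℝ) ^ z) ^ 5 ≤ Y := by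
    rw [pow_right_comm]
    exact hY.trans_eq' (by norm_num)
  have hX2 : (4 : ℝ) ^ z = ((2 : ℝ) ^ z) ^ 2 := by
    rw [pow_right_comm]
    norm_num
  have h4Y : (4 : ℝ) ^ z ≤ Y := (hX2.trans_le (pow_le_pow_right₀ hX (by norm_num))).trans hXY
  have hY1 : 1 ≤ Y := (one_le_pow₀ hX).trans hXY
  have hY0 : 0 < Y := zero_lt_one.trans_le hY1
  have hYT' : Y ≤ T :=
    (le_self_pow₀ hY1 two_ne_zero).trans (sq_le_of_pow_four_eq_rpow hσ.2.le hT hY1 hYT)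
  have hM : ((N * primorial z : ℕ) : ℝ) ≤ N * ((2 : ℝ) ^ z) ^ 2 := by
    rw [← hX2, Nat.cast_mul]
    gcongr
    exact_mod_cast primorial_le_four_pow z
  have hC := meanValueConst_pos
  have hσ0 : 0 < σ := by linarith [hσ.1]
  refine (integral_norm_sq_LFunction_mul_mollifier_sub_one_mul_le χ hN hP hr
    (natFloor_div_ne_zero hY0 hYT') hσ0 hσ.2.le hT
    (natFloor_div_mul_le (zero_le_one.trans hT) hY0 h4Y)).trans ?_
  have herror := approximationError_nonneg (N * primorial z) ⌊T / Y⌋₊ hσ0.le (zero_le_one.trans hT)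
  calc _ ≤ 2 * (meanValueConst * T * (ε * 2 ^ P.card)) +
        2 * (2 ^ P.card * 2 ^ z) * approximationError (N * primorial z) ⌊T / Y⌋₊ σ T := by
        gcongr
        · exact hε _
        · exact four_pow_card_le hP
    _ = 2 * (meanValueConst * ε) * (T * 2 ^ P.card) +
        2 * 2 ^ P.card * (2 ^ z * approximationError (N * primorial z) ⌊T / Y⌋₊ σ T) := by ring
    _ ≤ 2 * (meanValueConst * ε) * (T * 2 ^ P.card) + 2 * 2 ^ P.card *
        ((2 + 648 * (exp 4 * (2 * π)) * N ^ 2) * (T / Y)) := by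
      gcongr _ + _ * ?_
      exact mul_approximationError_le hσ hT hX hXY hYT hM
    _ = _ := by ring

lemma eventually_sum_Ioc_rpow_neg_le (hσ : 1 / 2 < σ) {ε : ℝ} (hε : 0 < ε) :
    ∀ᶠ z : ℕ in atTop, ∀ m : ℕ, ∑ n ∈ Finset.Ioc z m, (n : ℝ) ^ (-(2 * σ)) ≤ ε := by
  obtain ⟨s, hs⟩ := summable_iff_vanishing_norm.1
    (summable_nat_rpow.2 (by linarith : -(2 * σ) < -1)) ε hε
  filter_upwards [eventually_ge_atTop (s.sup id)] with z hz m
  refine (le_abs_self _).trans (hs _ (Finset.disjoint_left.2 fun n hn hns ↦ ?_)).le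
  exact (Finset.mem_Ioc.1 hn).1.not_ge ((Finset.le_sup (f := id) hns).trans hz)

lemma eventually_integral_norm_sq_LFunction_mul_mollifier_sub_one_mul_le {N : ℕ} [NeZero N]
    (χ : DirichletCharacter ℂ N) (hσ : σ ∈ Ioo (1 / 2) 1) {ε : ℝ} (hε : 0 < ε) :
    ∀ᶠ T in atTop, ∀ P ⊆ Nat.primesLE (primeCutoff σ T), ∀ r : ℕ → ℂ, (∀ p ∈ P, ‖r p‖ = 1) →
      ∫ t in T..2 * T, ‖(χ.LFunction (σ + t * I) * mollifier χ σ (primeCutoff σ T) t - 1) *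
        eulerPolynomial P r t‖ ^ 2 ≤ ε * (T * 2 ^ P.card) := by
  have hC := meanValueConst_pos
  have hinv : Tendsto (fun T : ℝ ↦ (2 + 648 * (exp 4 * (2 * π)) * N ^ 2) /
      T ^ ((σ - 1 / 2) / 2)) atTop (𝓝 0) :=
    tendsto_const_nhds.div_atTop (tendsto_rpow_atTop (by linarith [hσ.1]))
  filter_upwards [hinv.eventually_le_const (by positivity : 0 < ε / 4), eventually_ge_atTop 1,
    (tendsto_primeCutoff hσ.1).eventually (eventually_sum_Ioc_rpow_neg_le hσ.1
      (by positivity : 0 < ε / (4 * meanValueConst))),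
    (tendsto_primeCutoff hσ.1).eventually_ge_atTop N] with T hinv hT htail hN P hP r hr
  have hYT : (T ^ ((σ - 1 / 2) / 2)) ^ 4 = T ^ (2 * σ - 1) := by
    rw [← rpow_mul_natCast (zero_le_one.trans hT)]
    congr 1
    push_cast
    ring
  refine (integral_norm_sq_LFunction_mul_mollifier_sub_one_mul_le_add_div χ hσ hT hN hP hr
    (pow_primeCutoff_le hσ.1 hT) hYT htail).trans ?_
  gcongr
  calc _ ≤ 2 * (meanValueConst * (ε / (4 * meanValueConst)) + ε / 4) := by gcongr
    _ = ε := by field_simp; ring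

end MollifiedLFunction

section PrimeSelection

/-- The primes in `(z ^ (3 / 4), z]`, among which the primes of the resonator are chosen: their
logarithms differ from `log z` by a factor between `3 / 4` and `1`. -/
noncomputable def largePrimesLE (z : ℕ) : Finset ℕ :=
  {p ∈ Nat.primesLE z | (z : ℝ) ^ (3 / 4 : ℝ) < (p : ℕ)}

lemma mem_largePrimesLE {z p : ℕ} :
    p ∈ largePrimesLE z ↔ (p ≤ z ∧ p.Prime) ∧ (z : ℝ) ^ (3 / 4 : ℝ) < p := by
  rw [largePrimesLE, Finset.mem_filter, Nat.mem_primesLE]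

lemma eventually_rpow_three_quarters_mul_log_le :
    ∀ᶠ x : ℝ in atTop, x ^ (3 / 4 : ℝ) * log x ≤ 1 / 10 * x := by
  filter_upwards [(isLittleO_log_rpow_atTop (by norm_num : (0 : ℝ) < 1 / 4)).bound
    (by norm_num : (0 : ℝ) < 1 / 10), eventually_gt_atTop 0] with x hlog hx
  rw [norm_of_nonneg (by positivity : 0 ≤ x ^ (1 / 4 : ℝ))] at hlog
  calc x ^ (3 / 4 : ℝ) * log x ≤ x ^ (3 / 4 : ℝ) * (1 / 10 * x ^ (1 / 4 : ℝ)) := by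
        gcongr
        exact (le_norm_self _).trans hlog
    _ = 1 / 10 * x := by
        rw [mul_left_comm, ← rpow_add hx]
        norm_num

lemma primeCounting_le_card_largePrimesLE_add (z : ℕ) :
    (Nat.primeCounting z : ℝ) ≤ (largePrimesLE z).card + (z : ℝ) ^ (3 / 4 : ℝ) := by
  have hsmall : {p ∈ Nat.primesLE z | ¬(z : ℝ) ^ (3 / 4 : ℝ) < (p : ℕ)} ⊆
      Finset.Ioc 0 ⌊(z : ℝ) ^ (3 / 4 : ℝ)⌋₊ := fun p hp ↦ by
    rw [Finset.mem_filter, not_lt, Nat.mem_primesLE] at hp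
    exact Finset.mem_Ioc.2 ⟨hp.1.2.pos, Nat.le_floor hp.2⟩
  have hcard := Finset.card_le_card hsmall
  rw [Nat.card_Ioc, tsub_zero] at hcard
  rw [Nat.primeCounting, Nat.primeCounting', Nat.count_eq_card_filter_range,
    ← Nat.primesLE_eq_filter_range,
    ← Finset.card_filter_add_card_filter_not fun p : ℕ ↦ (z : ℝ) ^ (3 / 4 : ℝ) < p,
    Nat.cast_add, largePrimesLE]
  gcongr
  exact (Nat.cast_le.2 hcard).trans (Nat.floor_le (by positivity))

lemma eventually_le_card_largePrimesLE :
    ∀ᶠ z : ℕ in atTop, 2 / 5 * (z / log z) ≤ (largePrimesLE z).card := by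
  have hlog : ∀ᶠ x : ℝ in atTop, ‖log (x + 1)‖ ≤ 1 / 100 * ‖x + 1‖ :=
    (tendsto_atTop_add_const_right atTop 1 tendsto_id).eventually
      (isLittleO_log_id_atTop.bound (by norm_num))
  filter_upwards [tendsto_natCast_atTop_atTop.eventually eventually_rpow_three_quarters_mul_log_le,
    tendsto_natCast_atTop_atTop.eventually hlog, eventually_ge_atTop 2] with z hpow hlog hz
  have hz2 : (2 : ℝ) ≤ z := mod_cast hz
  have hlogz : 0 < log z := log_pos (by linarith)
  rw [norm_of_nonneg (by positivity : (0 : ℝ) ≤ z + 1)] at hlog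
  have hpi := (Chebyshev.pi_ge z).trans (primeCounting_le_card_largePrimesLE_add z)
  rw [div_le_iff₀ hlogz, add_mul] at hpi
  rw [mul_div_assoc', div_le_iff₀ hlogz]
  linarith [le_norm_self (log (z + 1)), mul_le_mul_of_nonneg_left log_two_gt_d9.le
    (zero_le_two.trans hz2)]

lemma eventually_exists_le_card_filter_natCast_eq (q : ℕ) [NeZero q] :
    ∀ᶠ z : ℕ in atTop, ∃ a : ZMod q,
      2 / 5 / q * (z / log z) ≤ {p ∈ largePrimesLE z | ((p : ℕ) : ZMod q) = a}.card := by
  filter_upwards [eventually_le_card_largePrimesLE] with z hz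
  obtain ⟨a, -, ha⟩ := Finset.exists_le_card_fiber_of_nsmul_le_card_of_maps_to
    (s := largePrimesLE z) (f := fun p ↦ (p : ZMod q))
    (b := 2 / 5 / q * (z / log z)) (fun _ _ ↦ Finset.mem_univ _) Finset.univ_nonempty (by
      rw [Finset.card_univ, ZMod.card, nsmul_eq_mul]
      refine hz.trans_eq' ?_
      have hq : (q : ℝ) ≠ 0 := NeZero.ne _
      field_simp)
  exact ⟨a, ha⟩

lemma exists_forall_half_le_re_mul_twist {v : ℂ} (hv : ‖v‖ = 1) {z : ℕ} (hz : 1 < z) :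
    ∃ w : ℝ, |w| ≤ π / log z ∧ ∀ p : ℕ, (z : ℝ) ^ (3 / 4 : ℝ) < p → p ≤ z →
      1 / 2 ≤ (v * twist w p).re := by
  have hlogz : 0 < log z := log_pos (mod_cast hz)
  refine ⟨v.arg / log z, ?_, fun p hp hpz ↦ ?_⟩
  · rw [abs_div, abs_of_pos hlogz]
    gcongr
    exact Complex.abs_arg_le_pi v
  have hp0 : (0 : ℝ) < p := (by positivity : (0 : ℝ) ≤ _).trans_lt hp
  have hlow : 3 / 4 ≤ log p / log z := by
    rw [le_div_iff₀ hlogz, ← log_rpow (by positivity)]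
    exact log_le_log (by positivity) hp.le
  have hupp : log p / log z ≤ 1 := (div_le_one hlogz).2 (log_le_log hp0 (mod_cast hpz))
  have hprod : v * twist (v.arg / log z) p =
      Complex.exp ((v.arg * (1 - log p / log z) : ℝ) * I) := by
    nth_rw 1 [twist_eq_exp _ (by exact_mod_cast hp0.ne'), ← Complex.norm_mul_exp_arg_mul_I v, hv,
      Complex.ofReal_one, one_mul, ← Complex.exp_add]
    congr 1
    push_cast
    ring
  rw [hprod, Complex.exp_ofReal_mul_I_re, ← cos_abs, ← cos_pi_div_three]
  refine cos_le_cos_of_nonneg_of_le_pi (abs_nonneg _) (by linarith [pi_pos]) ?_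
  rw [abs_mul, abs_of_nonneg (sub_nonneg.2 hupp)]
  calc |v.arg| * (1 - log p / log z) ≤ π * (1 / 4) := by
        gcongr
        · exact Complex.abs_arg_le_pi v
        · linarith
    _ ≤ π / 3 := by linarith [pi_pos]

lemma norm_dirichletCharacter_natCast_eq_one {N : ℕ} (χ : DirichletCharacter ℂ N) {p : ℕ}
    (hp : p.Prime) (hN : N ≠ 0) (hNp : N < p) : ‖χ (p : ZMod N)‖ = 1 := by
  have hcop : p.Coprime N :=
    hp.coprime_iff_not_dvd.2 fun h ↦ hNp.not_ge (Nat.le_of_dvd (Nat.pos_of_ne_zero hN) h)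
  simpa only [ZMod.coe_unitOfCoprime] using χ.unit_norm_eq_one (ZMod.unitOfCoprime p hcop)

/-- Primes of `largePrimesLE z` in one residue class modulo `∏ j, N j` share the value of `χ j`,
and their logarithms are so close that a single shift `w j` aligns the phases. -/
lemma exists_pos_forall_eventually_exists_primes {ι : Type*} [Finite ι] (N : ι → ℕ)
    [∀ j, NeZero (N j)] (χ : ∀ j, DirichletCharacter ℂ (N j)) :
    ∃ κ : ℝ, 0 < κ ∧ ∀ᶠ z : ℕ in atTop, ∃ P ⊆ Nat.primesLE z, κ * (z / log z) ≤ P.card ∧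
      ∃ w : ι → ℝ, ∀ j, |w j| ≤ π / log z ∧
        ∀ p ∈ P, 1 / 2 ≤ (χ j (p : ZMod (N j)) * twist (w j) p).re := by
  cases nonempty_fintype ι
  have hq : ∏ j, N j ≠ 0 := Finset.prod_ne_zero_iff.2 fun j _ ↦ NeZero.ne (N j)
  have hdvd (j : ι) : N j ∣ ∏ j, N j := Finset.dvd_prod_of_mem N (Finset.mem_univ j)
  have : NeZero (∏ j, N j) := ⟨hq⟩
  refine ⟨2 / 5 / (∏ j, N j : ℕ), by positivity, ?_⟩
  filter_upwards [eventually_exists_le_card_filter_natCast_eq (∏ j, N j), eventually_gt_atTop 1,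
    ((tendsto_rpow_atTop (by norm_num : (0 : ℝ) < 3 / 4)).comp
      tendsto_natCast_atTop_atTop).eventually_ge_atTop ((∏ j, N j : ℕ) : ℝ)] with z ⟨a, ha⟩ hz hqz
  refine ⟨_, (Finset.filter_subset _ _).trans (Finset.filter_subset _ _), ha, ?_⟩
  have halign (j : ι) : ∃ w : ℝ, |w| ≤ π / log z ∧
      ∀ p ∈ {p ∈ largePrimesLE z | ((p : ℕ) : ZMod (∏ j, N j)) = a},
        1 / 2 ≤ (χ j (p : ZMod (N j)) * twist w p).re := by
    simp only [Finset.mem_filter, mem_largePrimesLE]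
    by_cases hex : ∃ p₀ : ℕ, (p₀.Prime ∧ (z : ℝ) ^ (3 / 4 : ℝ) < p₀) ∧ (p₀ : ZMod (∏ j, N j)) = a
    · obtain ⟨p₀, ⟨hp₀, hzp₀⟩, hp₀a⟩ := hex
      have hNp₀ : N j < p₀ :=
        (Nat.le_of_dvd (Nat.pos_of_ne_zero hq) (hdvd j)).trans_lt (mod_cast hqz.trans_lt hzp₀)
      obtain ⟨w, hw, hre⟩ := exists_forall_half_le_re_mul_twist
        (norm_dirichletCharacter_natCast_eq_one (χ j) hp₀ (NeZero.ne _) hNp₀) hz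
      refine ⟨w, hw, fun p ⟨⟨⟨hpz, _⟩, hzp⟩, hpa⟩ ↦ ?_⟩
      have hcast : (p : ZMod (N j)) = p₀ := (ZMod.natCast_eq_natCast_iff _ _ _).2
        (((ZMod.natCast_eq_natCast_iff _ _ _).1 (hpa.trans hp₀a.symm)).of_dvd (hdvd j))
      exact hcast ▸ hre p hzp hpz
    · exact ⟨0, by simpa using div_nonneg pi_pos.le (log_natCast_nonneg z),
        fun p hp ↦ (hex ⟨p, ⟨hp.1.1.2, hp.1.2⟩, hp.2⟩).elim⟩
  choose w hw using halign
  exact ⟨w, hw⟩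

end PrimeSelection

section Resonance

lemma sum_norm_sq_dirichletCoeff_le {N : ℕ} (χ : DirichletCharacter ℂ N) {σ : ℝ} (hσ : 1 / 2 < σ)
    (hS : ∀ p ∈ S, p ≠ 0) :
    ∑ n ∈ S, ‖dirichletCoeff χ σ n‖ ^ 2 ≤ ∑' n : ℕ, (n : ℝ) ^ (-(2 * σ)) := by
  refine (Finset.sum_le_sum fun n hn ↦ ?_).trans
    ((summable_nat_rpow.2 (by linarith)).sum_le_tsum S fun n _ ↦ by positivity)
  rw [norm_dirichletCoeff _ _ (hS n hn)]
  calc (‖χ n‖ * (n : ℝ) ^ (-σ)) ^ 2 ≤ (1 * (n : ℝ) ^ (-σ)) ^ 2 := by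
        gcongr
        exact χ.norm_le_one n
    _ = (n : ℝ) ^ (-(2 * σ)) := by
        rw [one_mul, ← rpow_mul_natCast (Nat.cast_nonneg n)]
        congr 1
        push_cast
        ring

lemma card_mul_le_sum_re_dirichletCoeff_mul {N z : ℕ} {χ : DirichletCharacter ℂ N} {σ : ℝ}
    (hσ : 0 ≤ σ) (hP : P ⊆ Nat.primesLE z)
    (hre : ∀ p ∈ P, 1 / 2 ≤ (χ (p : ZMod N) * starRingEnd ℂ (r p)).re) :
    P.card * ((z : ℝ) ^ (-σ) / 2) ≤
      ∑ p ∈ P, (dirichletCoeff χ σ p * starRingEnd ℂ (r p)).re := by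
  rw [← nsmul_eq_mul]
  refine Finset.card_nsmul_le_sum P _ _ fun p hp ↦ ?_
  obtain ⟨hpz, hp'⟩ := Nat.mem_primesLE.1 (hP hp)
  have hcpow : (p : ℂ) ^ (-σ : ℂ) = ((p : ℝ) ^ (-σ) : ℝ) := by
    rw [Complex.ofReal_cpow (Nat.cast_nonneg p), Complex.ofReal_neg, Complex.ofReal_natCast]
  rw [dirichletCoeff, hcpow, mul_right_comm, mul_comm, Complex.re_ofReal_mul, div_eq_mul_one_div]
  gcongr ?_ * ?_
  · exact rpow_le_rpow_of_nonpos (mod_cast hp'.pos) (mod_cast hpz) (neg_nonpos.2 hσ)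
  · exact hre p hp

lemma mul_rpow_div_log_le {κ σ : ℝ} {z n : ℕ} (hz : z ≠ 0) (hn : κ * (z / log z) ≤ n) :
    κ / 2 * ((z : ℝ) ^ (1 - σ) / log z) ≤ n * ((z : ℝ) ^ (-σ) / 2) := calc
  κ / 2 * ((z : ℝ) ^ (1 - σ) / log z) = κ * (z / log z) * ((z : ℝ) ^ (-σ) / 2) := by
    rw [sub_eq_add_neg, rpow_add (by positivity), rpow_one]
    ring
  _ ≤ n * ((z : ℝ) ^ (-σ) / 2) := by gcongr

/-- The constant, uniform in the character, in the bound
`integral_norm_sq_mollifier_mul_twist_le` for the mollifier. -/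
noncomputable def mollifierConst (σ : ℝ) : ℝ :=
  meanValueConst * exp (∑' n : ℕ, (n : ℝ) ^ (-(2 * σ)))

lemma integral_norm_sq_mollifier_mul_twist_le {N z : ℕ} {χ : DirichletCharacter ℂ N}
    {κ σ T w : ℝ} (hσ : 1 / 2 < σ) (hz : z ≠ 0) (hzT : (16 : ℝ) ^ z ≤ T)
    (hP : P ⊆ Nat.primesLE z) (hcard : κ * (z / log z) ≤ P.card)
    (hre : ∀ p ∈ P, 1 / 2 ≤ (χ (p : ZMod N) * twist w p).re) :
    ∫ t in T..2 * T,
        ‖mollifier χ σ z t * eulerPolynomial P (fun p ↦ twist (-w) p) t‖ ^ 2 ≤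
      mollifierConst σ * exp (-(κ / 2 * ((z : ℝ) ^ (1 - σ) / log z))) * (T * 2 ^ P.card) := by
  have hT : 0 < T := (by positivity : (0 : ℝ) < 16 ^ z).trans_le hzT
  have hprime : ∀ p ∈ Nat.primesLE z, p.Prime := fun p hp ↦ (Nat.mem_primesLE.1 hp).2
  have hconj : ∀ p ∈ P, starRingEnd ℂ (twist (-w) p) = twist w p := fun p hp ↦ by
    rw [conj_twist _ (hprime p (hP hp)).ne_zero, neg_neg]
  have hprod : ((∏ p ∈ Nat.primesLE z, p : ℕ) : ℝ) ^ 2 ≤ T := calc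
    ((∏ p ∈ Nat.primesLE z, p : ℕ) : ℝ) ^ 2 ≤ ((4 : ℝ) ^ z) ^ 2 := by
      gcongr
      exact_mod_cast prod_le_four_pow Finset.Subset.rfl
    _ = 16 ^ z := by
      rw [pow_right_comm]
      norm_num
    _ ≤ T := hzT
  have hC := meanValueConst_pos
  calc _ ≤ meanValueConst * T * (2 ^ P.card *
          exp (∑ p ∈ Nat.primesLE z, ‖dirichletCoeff χ σ p‖ ^ 2 -
            ∑ p ∈ P, (dirichletCoeff χ σ p * starRingEnd ℂ (twist (-w) p)).re)) :=
        integral_norm_sq_eulerPolynomial_neg_mul_le hprime hP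
          (fun p hp ↦ norm_twist _ (hprime p (hP hp)).ne_zero) hT hprod _
    _ ≤ meanValueConst * T * (2 ^ P.card * exp (∑' n : ℕ, (n : ℝ) ^ (-(2 * σ)) -
          κ / 2 * ((z : ℝ) ^ (1 - σ) / log z))) := by
        gcongr
        · exact sum_norm_sq_dirichletCoeff_le χ hσ fun p hp ↦ (hprime p hp).ne_zero
        · exact (mul_rpow_div_log_le hz hcard).trans (card_mul_le_sum_re_dirichletCoeff_mul
            (by linarith) hP fun p hp ↦ hconj p hp ▸ hre p hp)
    _ = _ := by
        rw [sub_eq_add_neg, exp_add, mollifierConst]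
        ring

lemma le_integral_norm_sq_eulerPolynomial_one {z : ℕ} {T : ℝ} (hP : P ⊆ Nat.primesLE z)
    (hzT : 8 * (8 : ℝ) ^ z ≤ T) :
    T * 2 ^ P.card / 4 ≤ ∫ t in 5 / 4 * T..7 / 4 * T, ‖eulerPolynomial P 1 t‖ ^ 2 := by
  have hprod : ((∏ p ∈ P, p : ℕ) : ℝ) ≤ 4 ^ z := mod_cast prod_le_four_pow hP
  have hlower := le_integral_norm_sq_eulerPolynomial (r := 1)
    (fun p hp ↦ (Nat.mem_primesLE.1 (hP hp)).2) (fun p _ ↦ norm_one) (5 / 4 * T) (7 / 4 * T)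
  have herror : 2 * ((∏ p ∈ P, p : ℕ) : ℝ) * 4 ^ P.card ≤ T / 4 * 2 ^ P.card := calc
    2 * ((∏ p ∈ P, p : ℕ) : ℝ) * 4 ^ P.card ≤ 2 * 4 ^ z * (2 ^ P.card * 2 ^ z) := by
      gcongr
      exact four_pow_card_le hP
    _ = 2 * (4 ^ z * 2 ^ z) * 2 ^ P.card := by ring
    _ ≤ T / 4 * 2 ^ P.card := by
      gcongr
      rw [← mul_pow]
      norm_num
      linarith
  linarith

lemma integral_norm_sq_comp_add_mul_eulerPolynomial_le {F : ℝ → ℂ} (hF : ContinuousOn F (Ioi 0))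
    (hP : ∀ p ∈ P, p.Prime) {T w : ℝ} (hT : 0 < T) (hw : |w| ≤ T / 4) :
    ∫ t in 5 / 4 * T..7 / 4 * T, ‖F (t + w) * eulerPolynomial P 1 t‖ ^ 2 ≤
      ∫ t in T..2 * T, ‖F t * eulerPolynomial P (fun p ↦ twist (-w) p) t‖ ^ 2 := by
  have hshift (t : ℝ) :
      eulerPolynomial P 1 t = eulerPolynomial P (fun p ↦ twist (-w) p) (t + w) := by
    simpa only [neg_add_cancel_comm_assoc, add_comm w, Pi.one_apply, one_mul, add_neg_cancel_right]
      using eulerPolynomial_add hP 1 (-w) (t + w)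
  simp only [hshift]
  rw [intervalIntegral.integral_comp_add_right
    fun t ↦ ‖F t * eulerPolynomial P (fun p ↦ twist (-w) p) t‖ ^ 2]
  rw [abs_le] at hw
  have hcont : ContinuousOn (fun t ↦ ‖F t * eulerPolynomial P (fun p ↦ twist (-w) p) t‖ ^ 2)
      (uIcc T (2 * T)) := by
    rw [uIcc_of_le (by linarith)]
    exact ((hF.mono fun t ht ↦ hT.trans_le ht.1).mul
      (continuous_eulerPolynomial hP _).continuousOn).norm.pow 2
  exact intervalIntegral.integral_mono_interval (by linarith) (by linarith) (by linarith)
    (.of_forall fun t ↦ by positivity) hcont.intervalIntegrable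

lemma exists_forall_norm_lt_one_of_sum_integral_lt {ι : Type*} [Fintype ι] {F : ι → ℝ → ℂ}
    {R : ℝ → ℂ} {a b : ℝ} (hab : a ≤ b) (hF : ∀ i, ContinuousOn (F i) (Icc a b))
    (hR : ContinuousOn R (Icc a b))
    (h : ∑ i, ∫ t in a..b, ‖F i t * R t‖ ^ 2 < ∫ t in a..b, ‖R t‖ ^ 2) :
    ∃ t ∈ Icc a b, ∀ i, ‖F i t‖ < 1 := by
  rw [← uIcc_of_le hab] at hF hR
  have hint (i : ι) : IntervalIntegrable (fun t ↦ ‖F i t * R t‖ ^ 2) volume a b :=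
    (((hF i).mul hR).norm.pow 2).intervalIntegrable
  by_contra! hlarge
  refine h.not_ge ?_
  rw [← intervalIntegral.integral_finsetSum fun i _ ↦ hint i]
  refine intervalIntegral.integral_mono_on hab (hR.norm.pow 2).intervalIntegrable
    (by simpa only [Finset.sum_fn] using IntervalIntegrable.sum Finset.univ fun i _ ↦ hint i)
    fun t ht ↦ ?_
  obtain ⟨i, hi⟩ := hlarge t ht
  calc ‖R t‖ ^ 2 ≤ ‖F i t * R t‖ ^ 2 := by
        rw [norm_mul]
        gcongr
        exact le_mul_of_one_le_left (norm_nonneg _) hi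
    _ ≤ ∑ i, ‖F i t * R t‖ ^ 2 :=
        Finset.single_le_sum (f := fun i ↦ ‖F i t * R t‖ ^ 2) (fun i _ ↦ by positivity)
          (Finset.mem_univ i)

lemma exists_forall_norm_comp_add_lt_one {ι : Type*} [Fintype ι] {F : ι → ℝ → ℂ} {z : ℕ}
    {w : ι → ℝ} {T : ℝ} (hF : ∀ i, ContinuousOn (F i) (Ioi 0)) (hP : P ⊆ Nat.primesLE z)
    (hzT : 8 * (8 : ℝ) ^ z ≤ T) (hw : ∀ i, |w i| ≤ T / 4)
    (h : ∑ i, ∫ t in T..2 * T, ‖F i t * eulerPolynomial P (fun p ↦ twist (-w i) p) t‖ ^ 2 <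
      T * 2 ^ P.card / 4) :
    ∃ t ∈ Icc (5 / 4 * T) (7 / 4 * T), ∀ i, ‖F i (t + w i)‖ < 1 := by
  have hT : 0 < T := (by positivity : (0 : ℝ) < 8 * 8 ^ z).trans_le hzT
  have hprime : ∀ p ∈ P, p.Prime := fun p hp ↦ (Nat.mem_primesLE.1 (hP hp)).2
  have hmaps (i : ι) : MapsTo (· + w i) (Icc (5 / 4 * T) (7 / 4 * T)) (Ioi 0) := fun t ht ↦ by
    rw [mem_Ioi]
    linarith [ht.1, (abs_le.1 (hw i)).1]
  exact exists_forall_norm_lt_one_of_sum_integral_lt (by linarith)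
    (fun i ↦ (hF i).comp (by fun_prop) (hmaps i))
    (continuous_eulerPolynomial hprime 1).continuousOn <|
    (Finset.sum_le_sum fun i _ ↦
      integral_norm_sq_comp_add_mul_eulerPolynomial_le (hF i) hprime hT (hw i)).trans_lt
    (h.trans_le (le_integral_norm_sq_eulerPolynomial_one hP hzT))

lemma div_two_le_norm_of_norm_mul_lt_one {l q : ℂ} {W : ℝ} (hW : 0 ≤ W)
    (hlq : ‖2 * (l * q - 1)‖ < 1) (hq : ‖W * q‖ < 1) : W / 2 ≤ ‖l‖ := by
  rw [norm_mul, Complex.norm_ofNat] at hlq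
  rw [norm_mul, Complex.norm_of_nonneg hW] at hq
  have hhalf : 1 / 2 ≤ ‖l‖ * ‖q‖ := by
    rw [← norm_mul]
    have hsub := norm_sub_norm_le 1 (l * q)
    rw [norm_one, norm_sub_rev] at hsub
    linarith
  calc W / 2 = W * (1 / 2) := by ring
    _ ≤ W * (‖l‖ * ‖q‖) := by gcongr
    _ = ‖l‖ * (W * ‖q‖) := by ring
    _ ≤ ‖l‖ := mul_le_of_le_one_right (norm_nonneg l) hq.le

lemma exists_forall_div_two_le_norm_LFunction {ι : Type*} [Fintype ι] {N : ι → ℕ}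
    [∀ j, NeZero (N j)] {χ : ∀ j, DirichletCharacter ℂ (N j)} {z : ℕ} {w : ι → ℝ}
    {σ T W ε η : ℝ} (hP : P ⊆ Nat.primesLE z) (hzT : 8 * (8 : ℝ) ^ z ≤ T) (hw : ∀ j, |w j| ≤ T / 4)
    (hW : 0 ≤ W)
    (hLM : ∀ j, ∫ t in T..2 * T, ‖((χ j).LFunction (σ + t * I) * mollifier (χ j) σ z t - 1) *
      eulerPolynomial P (fun p ↦ twist (-w j) p) t‖ ^ 2 ≤ ε * (T * 2 ^ P.card))
    (hM : ∀ j, ∫ t in T..2 * T, ‖mollifier (χ j) σ z t *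
      eulerPolynomial P (fun p ↦ twist (-w j) p) t‖ ^ 2 ≤ η * (T * 2 ^ P.card))
    (hεη : Fintype.card ι * (4 * ε + W ^ 2 * η) < 1 / 4) :
    ∃ t ∈ Icc (5 / 4 * T) (7 / 4 * T), ∀ j,
      W / 2 ≤ ‖(χ j).LFunction (σ + (t + w j : ℝ) * I)‖ := by
  let F : ι ⊕ ι → ℝ → ℂ := Sum.elim
    (fun j t ↦ 2 * ((χ j).LFunction (σ + t * I) * mollifier (χ j) σ z t - 1))
    (fun j t ↦ W * mollifier (χ j) σ z t)
  have hF : ∀ i, ContinuousOn (F i) (Ioi 0) := by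
    rintro (j | j)
    · exact ((continuousOn_LFunction_mul_mollifier (χ j) σ z).sub continuousOn_const).const_mul 2
    · exact (continuous_mollifier (χ j) σ z).continuousOn.const_mul _
  have hT : 0 < T := (by positivity : (0 : ℝ) < 8 * 8 ^ z).trans_le hzT
  have hsum : ∑ i, ∫ t in T..2 * T,
      ‖F i t * eulerPolynomial P (fun p ↦ twist (-Sum.elim w w i) p) t‖ ^ 2 <
        T * 2 ^ P.card / 4 := calc
    _ ≤ ∑ _ : ι, 2 ^ 2 * (ε * (T * 2 ^ P.card)) + ∑ _ : ι, W ^ 2 * (η * (T * 2 ^ P.card)) := by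
      simp only [Fintype.sum_sum_type, Sum.elim_inl, Sum.elim_inr, F, mul_assoc (2 : ℂ),
        mul_assoc (W : ℂ), norm_mul (2 : ℂ), norm_mul (W : ℂ), Complex.norm_ofNat,
        Complex.norm_of_nonneg hW, mul_pow (2 : ℝ), mul_pow W, intervalIntegral.integral_const_mul]
      gcongr with j _ j _
      · exact hLM j
      · exact hM j
    _ = Fintype.card ι * (4 * ε + W ^ 2 * η) * (T * 2 ^ P.card) := by
      simp only [Finset.sum_const, Finset.card_univ, nsmul_eq_mul]
      ring
    _ < 1 / 4 * (T * 2 ^ P.card) := by gcongr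
    _ = T * 2 ^ P.card / 4 := by ring
  obtain ⟨t, ht, hlt⟩ := exists_forall_norm_comp_add_lt_one hF hP hzT (Sum.forall.2 ⟨hw, hw⟩) hsum
  exact ⟨t, ht, fun j ↦ div_two_le_norm_of_norm_mul_lt_one hW (hlt (.inl j)) (hlt (.inr j))⟩

end Resonance

section Growth

variable {σ : ℝ}

lemma tendsto_rpow_div_log_atTop {a : ℝ} (ha : 0 < a) :
    Tendsto (fun x : ℝ ↦ x ^ a / log x) atTop atTop := by
  have hzero : Tendsto (fun x : ℝ ↦ log x / x ^ a) atTop (𝓝[>] 0) :=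
    tendsto_nhdsWithin_iff.2 ⟨(isLittleO_log_rpow_atTop ha).tendsto_div_nhds_zero, by
      filter_upwards [eventually_gt_atTop 1] with x hx
      exact div_pos (log_pos hx) (rpow_pos_of_pos (zero_lt_one.trans hx) a)⟩
  simpa only [Pi.inv_def, inv_div] using hzero.inv_tendsto_nhdsGT_zero

lemma eventually_primeCutoff_mem_Icc (hσ : σ ∈ Ioo (1 / 2) 1) :
    ∀ᶠ T in atTop, (primeCutoff σ T : ℝ) ∈ Icc ((σ - 1 / 2) / 16 * log T) (log T) := by
  have hδ : 0 < (σ - 1 / 2) / 8 := by linarith [hσ.1]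
  filter_upwards [(tendsto_log_atTop.const_mul_atTop hδ).eventually_ge_atTop 1,
    eventually_ge_atTop 1] with T hlarge hT
  refine ⟨?_, ?_⟩
  · linarith [Nat.div_two_lt_floor hlarge, show (primeCutoff σ T : ℝ) = ⌊(σ - 1 / 2) / 8 * log T⌋₊
      from rfl]
  · exact (Nat.floor_le (zero_le_one.trans hlarge)).trans
      (mul_le_of_le_one_left (log_nonneg hT) (by linarith [hσ.2]))

lemma eventually_log_log_le (hσ : σ ∈ Ioo (1 / 2) 1) :
    ∀ᶠ T in atTop, log (log T) ≤ 2 * log (primeCutoff σ T) := by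
  have hδ : 0 < (σ - 1 / 2) / 16 := by linarith [hσ.1]
  filter_upwards [eventually_primeCutoff_mem_Icc hσ, eventually_gt_atTop 1,
    (tendsto_natCast_atTop_atTop.comp (tendsto_primeCutoff hσ.1)).eventually_ge_atTop
      ((σ - 1 / 2) / 16)⁻¹] with T hz hT hzδ
  rw [← Nat.cast_ofNat (R := ℝ), ← log_pow, sq]
  refine log_le_log (log_pos hT) ?_
  calc log T = ((σ - 1 / 2) / 16)⁻¹ * ((σ - 1 / 2) / 16 * log T) :=
        (inv_mul_cancel_left₀ hδ.ne' _).symm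
    _ ≤ primeCutoff σ T * primeCutoff σ T :=
        mul_le_mul hzδ hz.1 (mul_nonneg hδ.le (log_nonneg hT.le)) (Nat.cast_nonneg _)

lemma eventually_rpow_div_log_log_le (hσ : σ ∈ Ioo (1 / 2) 1) :
    ∀ᶠ T in atTop, ((σ - 1 / 2) / 16) ^ (1 - σ) * (log T ^ (1 - σ) / log (log T)) ≤
      (primeCutoff σ T : ℝ) ^ (1 - σ) / log (primeCutoff σ T) := by
  have hδ : 0 < (σ - 1 / 2) / 16 := by linarith [hσ.1]
  filter_upwards [eventually_primeCutoff_mem_Icc hσ, eventually_gt_atTop 1,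
    (tendsto_primeCutoff hσ.1).eventually_gt_atTop 1] with T hz hT hz1
  have hlogz : 0 < log (primeCutoff σ T) := log_pos (mod_cast hz1)
  rw [← mul_div_assoc, ← mul_rpow hδ.le (log_nonneg hT.le)]
  gcongr
  · exact mul_nonneg hδ.le (log_nonneg hT.le)
  · linarith [hσ.2]
  · exact hz.1
  · exact hz.2

lemma pow_primeCutoff_le_self {T : ℝ} (hσ : σ ∈ Ioo (1 / 2) 1) (hT : 1 ≤ T) :
    (32 : ℝ) ^ primeCutoff σ T ≤ T := calc
  (32 : ℝ) ^ primeCutoff σ T ≤ T ^ ((σ - 1 / 2) / 2) := pow_primeCutoff_le hσ.1 hT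
  _ ≤ T ^ (1 : ℝ) := rpow_le_rpow_of_exponent_le hT (by linarith [hσ.2])
  _ = T := rpow_one T

lemma eight_mul_eight_pow_le {z : ℕ} (hz : 2 ≤ z) : 8 * (8 : ℝ) ^ z ≤ 32 ^ z := calc
  8 * (8 : ℝ) ^ z ≤ 4 ^ 2 * 8 ^ z := by gcongr; norm_num
  _ ≤ 4 ^ z * 8 ^ z := by
    gcongr
    norm_num
  _ = 32 ^ z := by
    rw [← mul_pow]
    norm_num

lemma one_le_log_natCast {n : ℕ} (hn : 3 ≤ n) : 1 ≤ log n := by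
  rw [le_log_iff_exp_le (by positivity)]
  exact exp_one_lt_three.le.trans (mod_cast hn)

lemma eventually_mul_exp_neg_mul_le (K : ℝ) {a ε : ℝ} (ha : 0 < a) (hε : 0 < ε) :
    ∀ᶠ x in atTop, K * exp (-(a * x)) ≤ ε := by
  have hdecay : Tendsto (fun x ↦ K * exp (-(a * x))) atTop (𝓝 (K * 0)) :=
    (tendsto_exp_neg_atTop_nhds_zero.comp (tendsto_id.const_mul_atTop ha)).const_mul K
  exact hdecay.eventually_le_const (by rwa [mul_zero])

lemma exp_le_exp_two_mul_div_two {x : ℝ} (hx : log 2 ≤ x) : exp x ≤ exp (2 * x) / 2 := by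
  rw [le_div_iff₀ two_pos, two_mul, exp_add]
  gcongr
  rwa [← log_le_iff_le_exp two_pos]

lemma natCast_mul_four_mul_add_lt {n : ℕ} {η : ℝ} (hη : η ≤ 1 / (32 * (n + 1))) :
    n * (4 * (1 / (32 * (n + 1))) + η) < 1 / 4 := by
  calc n * (4 * (1 / (32 * (n + 1))) + η)
      ≤ n * (4 * (1 / (32 * (n + 1))) + 1 / (32 * (n + 1))) := by gcongr
    _ = 5 / 32 * (n / (n + 1)) := by
      field_simp
      norm_num
    _ ≤ 5 / 32 * 1 := by
      gcongr
      exact div_le_one_of_le₀ (by linarith) (by positivity)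
    _ < 1 / 4 := by norm_num

end Growth

lemma exists_pos_eventually_exists_le_norm_LFunction {σ : ℝ} (hσ : σ ∈ Ioo (1 / 2) 1)
    {ι : Type*} [Finite ι] (N : ι → ℕ) [∀ j, NeZero (N j)]
    (χ : ∀ j, DirichletCharacter ℂ (N j)) :
    ∃ κ : ℝ, 0 < κ ∧ ∀ᶠ T in atTop, ∃ t ∈ Icc (5 / 4 * T) (7 / 4 * T), ∃ w : ι → ℝ, ∀ j,
      |w j| ≤ π / log (primeCutoff σ T) ∧
      exp (κ * ((primeCutoff σ T : ℝ) ^ (1 - σ) / log (primeCutoff σ T))) ≤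
        ‖(χ j).LFunction (σ + (t + w j : ℝ) * I)‖ := by
  cases nonempty_fintype ι
  obtain ⟨κ, hκ, hprimes⟩ := exists_pos_forall_eventually_exists_primes N χ
  refine ⟨κ / 16, by positivity, ?_⟩
  have hε : 0 < 1 / (32 * (Fintype.card ι + 1 : ℝ)) := by positivity
  have hz := tendsto_primeCutoff hσ.1
  have hg : Tendsto (fun T ↦ (primeCutoff σ T : ℝ) ^ (1 - σ) / log (primeCutoff σ T)) atTop atTop :=
    ((tendsto_rpow_div_log_atTop (sub_pos.2 hσ.2)).comp tendsto_natCast_atTop_atTop).comp hz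
  filter_upwards [hz.eventually hprimes, hz.eventually_ge_atTop 3,
    (hg.eventually (eventually_mul_exp_neg_mul_le (mollifierConst σ)
      (by positivity : 0 < κ / 4) hε)),
    (hg.const_mul_atTop (by positivity : 0 < κ / 16)).eventually_ge_atTop (log 2),
    eventually_all.2 fun j ↦
      eventually_integral_norm_sq_LFunction_mul_mollifier_sub_one_mul_le (χ j) hσ hε,
    eventually_ge_atTop 16] with T ⟨P, hP, hcard, w, hw⟩ hz3 hdecay hlog2 hLM hT
  have hzT := pow_primeCutoff_le_self hσ (by linarith : 1 ≤ T)
  have hwT (j : ι) : |w j| ≤ T / 4 :=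
    ((hw j).1.trans (div_le_self pi_pos.le (one_le_log_natCast hz3))).trans
      (by linarith [pi_le_four])
  set g := (primeCutoff σ T : ℝ) ^ (1 - σ) / log (primeCutoff σ T)
  have hexp : exp (2 * (κ / 16 * g)) ^ 2 * (mollifierConst σ * exp (-(κ / 2 * g))) =
      mollifierConst σ * exp (-(κ / 4 * g)) := by
    rw [← exp_nat_mul, mul_left_comm, ← exp_add]
    ring_nf
  obtain ⟨t, ht, hlarge⟩ := exists_forall_div_two_le_norm_LFunction hP
    ((eight_mul_eight_pow_le (by lia)).trans hzT) hwT (exp_pos _).le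
    (fun j ↦ hLM j P hP _ fun p hp ↦ norm_twist _ (Nat.mem_primesLE.1 (hP hp)).2.ne_zero)
    (fun j ↦ integral_norm_sq_mollifier_mul_twist_le hσ.1 (by lia)
      ((pow_le_pow_left₀ (by norm_num) (by norm_num) _).trans hzT) hP hcard (hw j).2)
    (hexp ▸ natCast_mul_four_mul_add_lt hdecay)
  exact ⟨t, ht, w, fun j ↦ ⟨(hw j).1, (exp_le_exp_two_mul_div_two hlog2).trans (hlarge j)⟩⟩

theorem joint_large_values_dirichlet_general {σ : ℝ} (hσ : σ ∈ Ioo (1 / 2) 1)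
    {ι : Type*} [Finite ι] (N : ι → ℕ) [∀ j, NeZero (N j)]
    (χ : ∀ j, DirichletCharacter ℂ (N j)) :
    ∃ c : ℝ, 0 < c ∧ ∀ᶠ T in atTop, ∃ t : ι → ℝ, (∀ j, t j ∈ Icc T (2 * T)) ∧
      (∀ i j, |t i - t j| ≤ 4 * π / log (log T)) ∧
      ∀ j, exp (c * log T ^ (1 - σ) / log (log T)) ≤ ‖(χ j).LFunction (σ + t j * I)‖ := by
  obtain ⟨κ, hκ, hlarge⟩ := exists_pos_eventually_exists_le_norm_LFunction hσ N χ
  have hδ : 0 < (σ - 1 / 2) / 16 := by linarith [hσ.1]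
  refine ⟨κ * ((σ - 1 / 2) / 16) ^ (1 - σ), by positivity, ?_⟩
  filter_upwards [hlarge, eventually_log_log_le hσ, eventually_rpow_div_log_log_le hσ,
    (tendsto_log_atTop.comp tendsto_log_atTop).eventually_ge_atTop 1, eventually_ge_atTop 32]
    with T ⟨t, ht, w, hw⟩ hlog hgrowth hloglog hT
  rw [Function.comp_apply] at hloglog
  have hshift (j : ι) : |w j| ≤ 2 * π / log (log T) := calc
    |w j| ≤ π / log (primeCutoff σ T) := (hw j).1
    _ = 2 * π / (2 * log (primeCutoff σ T)) := (mul_div_mul_left _ _ two_ne_zero).symm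
    _ ≤ 2 * π / log (log T) := by gcongr
  have hshift' (j : ι) : |w j| ≤ T / 4 :=
    (hshift j).trans ((div_le_self (by positivity) hloglog).trans (by linarith [pi_le_four]))
  refine ⟨fun j ↦ t + w j, fun j ↦ ?_, fun i j ↦ ?_, fun j ↦ ?_⟩
  · obtain ⟨hlow, hupp⟩ := abs_le.1 (hshift' j)
    exact ⟨by linarith [ht.1], by linarith [ht.2]⟩
  · rw [add_sub_add_left_eq_sub]
    exact (abs_sub _ _).trans ((add_le_add (hshift i) (hshift j)).trans_eq (by ring))
  · refine (exp_le_exp.2 ?_).trans (hw j).2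
    rw [mul_div_assoc, mul_assoc]
    gcongr

end

/-- Joint large values of Dirichlet L-functions of distinct primitive characters on the
vertical line `Re s = σ₀`: the case `θ_1 = ⋯ = θ_k = 0` of the main theorem. -/
theorem joint_large_values_dirichlet (σ₀ : ℝ) (hσ : σ₀ ∈ Set.Ioo (1/2 : ℝ) 1)
    (k : ℕ) (hk : 1 ≤ k) (N : Fin k → ℕ) [∀ j, NeZero (N j)]
    (χ : ∀ j, DirichletCharacter ℂ (N j))
    (hprim : ∀ j, (χ j).IsPrimitive)
    (hdist : ∀ i j, i ≠ j → (fun n : ℕ => χ i (n : ZMod (N i))) ≠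
      (fun n : ℕ => χ j (n : ZMod (N j)))) :
    ∃ c : ℝ, 0 < c ∧ ∃ T₀ : ℝ, ∀ T ≥ T₀, ∃ t : Fin k → ℝ,
      (∀ j, t j ∈ Set.Icc T (2 * T)) ∧
      (∀ i j, |t i - t j| ≤ 2 * (Real.log T) ^ ((1 + σ₀) / 2) *
        Real.sqrt (Real.log (Real.log T))) ∧
      ∀ j, Real.exp (c * (Real.log T) ^ (1 - σ₀) / Real.log (Real.log T)) ≤
        ‖(χ j).LFunction ((σ₀ : ℂ) + (t j : ℂ) * Complex.I)‖ := by
  obtain ⟨c, hc, hlarge⟩ := joint_large_values_dirichlet_general hσ N χ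
  have hpow : ∀ᶠ T in Filter.atTop, 2 * π ≤ log T ^ ((1 + σ₀) / 2) :=
    ((tendsto_rpow_atTop (by linarith [hσ.1])).comp tendsto_log_atTop).eventually_ge_atTop _
  have hloglog : ∀ᶠ T in Filter.atTop, 1 ≤ log (log T) :=
    (tendsto_log_atTop.comp tendsto_log_atTop).eventually_ge_atTop 1
  refine ⟨c, hc, Filter.eventually_atTop.1 ?_⟩
  filter_upwards [hlarge, hpow, hloglog] with T ⟨t, ht, hclose, hL⟩ hpow hloglog
  refine ⟨t, ht, fun i j ↦ ?_, hL⟩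
  calc |t i - t j| ≤ 4 * π / log (log T) := hclose i j
    _ ≤ 2 * (2 * π) * 1 := (div_le_self (by positivity) hloglog).trans_eq (by ring)
    _ ≤ 2 * log T ^ ((1 + σ₀) / 2) * sqrt (log (log T)) := by
      gcongr
      · linarith [pi_pos]
      · exact one_le_sqrt.2 hloglog
end
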